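/- arXiv:2509.19901 — 3 statements merged into one kernel-verified Lean document; each statement's English description precedes it below -/
import Mathlib

section
/- Let F : ℝ^K × ℝ^X → ℝ be continuous on Δ_K × Δ_X and differentiable in p at every point of int Δ_K × Δ_X, with ‖∇_p F(p,μ)‖_∞ ≤ M there for some M < ∞. For (p,μ) ∈ Δ_K × Δ_X define C(p,μ) = conv{ g ∈ ℝ^K : there exist (p_n,μ_n) ∈ int Δ_K × Δ_X with (p_n,μ_n) → (p,μ) and ∇_p F(p_n,μ_n) → g }, and define LMO_p(p,μ) = conv{ q ∈ Δ_K : there exists f ∈ C(p,μ) with qᵀf = max_{q'∈Δ_K} q'ᵀf }. Then for every (p,μ), LMO_p(p,μ) is nonempty, convex and compact, and its graph {(p,μ,q) : (p,μ) ∈ Δ_K × Δ_X, q ∈ LMO_p(p,μ)} is a closed subset of Δ_K × Δ_X × Δ_K. -/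
open Filter

theorem aux_compact {E : Type*} [NormedAddCommGroup E]
    [NormedSpace ℝ E] [FiniteDimensional ℝ E] (s : Set E) (hs : IsCompact s) :
    IsCompact (convexHull ℝ s) := by
  rcases s.eq_empty_or_nonempty with rfl | ⟨x0, hx0⟩
  · simp
  let N := Module.finrank ℝ E + 1
  let φ : (Fin N → ℝ) × (Fin N → E) → E := fun u => ∑ i, u.1 i • u.2 i
  have hφ : Continuous φ := by fun_prop
  have hcomp : IsCompact ((stdSimplex ℝ (Fin N)) ×ˢ (Set.univ.pi fun _ : Fin N => s)) :=
    (isCompact_stdSimplex ℝ _).prod (isCompact_univ_pi fun _ => hs)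
  have heq : convexHull ℝ s = φ '' ((stdSimplex ℝ (Fin N)) ×ˢ (Set.univ.pi fun _ : Fin N => s)) := by
    apply Set.Subset.antisymm
    · intro x hx
      obtain ⟨ι, _, z, w, hz, hind, hw, hw1, hwx⟩ := eq_pos_convex_span_of_mem_convexHull hx
      have hcard : Fintype.card ι ≤ Fintype.card (Fin N) := by
        rw [Fintype.card_fin]
        exact hind.card_le_finrank_succ.trans (Nat.succ_le_succ (Submodule.finrank_le _))
      obtain ⟨e⟩ := Function.Embedding.nonempty_of_card_le hcard
      have hnot : ∀ j, j ∉ Set.range e → Function.extend e w 0 j = 0 := by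
        intro j hj
        exact Function.extend_apply' _ _ _ hj
      refine ⟨(Function.extend e w 0, Function.extend e z (fun _ => x0)), ⟨⟨?_, ?_⟩, ?_⟩, ?_⟩
      · intro j
        by_cases hj : j ∈ Set.range e
        · obtain ⟨i, rfl⟩ := hj
          simpa [e.injective.extend_apply] using (hw i).le
        · exact (hnot j hj).ge
      · rw [← hw1]
        exact (Fintype.sum_of_injective e e.injective _ _ hnot
          (fun i => by simp [e.injective.extend_apply])).symm
      · intro j _
        by_cases hj : j ∈ Set.range e
        · obtain ⟨i, rfl⟩ := hj
          simpa [e.injective.extend_apply] using hz ⟨i, rfl⟩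
        · simpa [Function.extend_apply' _ _ _ hj] using hx0
      · rw [← hwx]
        exact (Fintype.sum_of_injective e e.injective _ _
          (fun j hj => by simp [hnot j hj])
          (fun i => by simp [e.injective.extend_apply])).symm
    · rintro _ ⟨⟨w, z⟩, ⟨hw, hz⟩, rfl⟩
      exact (convex_convexHull ℝ s).sum_mem (fun i _ => hw.1 i) hw.2
        (fun i _ => subset_convexHull ℝ s (hz i trivial))
  rw [heq]
  exact hcomp.image hφ

theorem aux_proj {Y E : Type*} [TopologicalSpace Y] [TopologicalSpace E]
    (H : Set (Y × E)) (hH : IsClosed H) (B : Set E) (hB : IsCompact B) :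
    IsClosed {y : Y | ∃ f ∈ B, (y, f) ∈ H} := by
  rw [← isOpen_compl_iff, isOpen_iff_eventually]
  intro y hy
  have h1 : ∀ f ∈ B, ∀ᶠ z : Y × E in nhds (y, f), z ∉ H := by
    intro f hf
    exact hH.isOpen_compl.eventually_mem (fun h => hy ⟨f, hf, h⟩)
  have := hB.eventually_forall_of_forall_eventually (P := fun y f => (y, f) ∉ H) h1
  filter_upwards [this] with y' hy'
  rintro ⟨f, hf, h⟩
  exact hy' f hf h

theorem aux_conv {Y E : Type*} [TopologicalSpace Y] [T2Space Y] [NormedAddCommGroup E]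
    [NormedSpace ℝ E] [FiniteDimensional ℝ E]
    (G : Set (Y × E)) (hG : IsClosed G) (B : Set E) (hB : IsCompact B)
    (hGB : ∀ y g, (y, g) ∈ G → g ∈ B) :
    IsClosed {t : Y × E | t.2 ∈ convexHull ℝ {g | (t.1, g) ∈ G}} := by
  rw [← isOpen_compl_iff, isOpen_iff_eventually]
  rintro ⟨y, x⟩ hx
  have hcl : IsClosed {g | (y, g) ∈ G} := hG.preimage (by fun_prop)
  have hcomp : IsCompact {g | (y, g) ∈ G} := hB.of_isClosed_subset hcl (fun g hg => hGB y g hg)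
  have hcl2 : IsClosed (convexHull ℝ {g | (y, g) ∈ G}) := (aux_compact _ hcomp).isClosed
  obtain ⟨l, c, h1, h2⟩ := geometric_hahn_banach_closed_point (convex_convexHull ℝ _) hcl2 hx
  have h3 : ∀ g ∈ B, ∀ᶠ z : Y × E in nhds (y, g), z ∈ G → l z.2 < c := by
    intro g hg
    by_cases hgG : (y, g) ∈ G
    · have : l g < c := h1 g (subset_convexHull ℝ _ hgG)
      have ho : IsOpen {z : Y × E | l z.2 < c} := isOpen_lt (by fun_prop) (by fun_prop)
      filter_upwards [ho.mem_nhds (show (y, g) ∈ {z : Y × E | l z.2 < c} from this)] with z hz _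
      exact hz
    · filter_upwards [hG.isOpen_compl.mem_nhds hgG] with z hz hz'
      exact absurd hz' hz
  have h4 := hB.eventually_forall_of_forall_eventually
    (P := fun y g => (y, g) ∈ G → l g < c) h3
  have h5 : ∀ᶠ x' in nhds x, c < l x' :=
    (isOpen_lt continuous_const l.continuous).eventually_mem h2
  rw [nhds_prod_eq]
  filter_upwards [h4.prod_mk h5] with t ht hmem
  have hsub : convexHull ℝ {g | (t.1, g) ∈ G} ⊆ {g | l g < c} :=
    convexHull_min (fun g hg => ht.1 g (hGB _ _ hg) hg) (convex_halfSpace_lt l.isLinear c)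
  exact absurd (hsub hmem) (not_lt.2 ht.2.le)

/-- For `F` continuous on `Δ_K × Δ_X` and differentiable in `p` on
`int Δ_K × Δ_X` with gradient `gradp` bounded by `M` in sup norm, the correspondence
`LMO_p(p,μ) = conv{ q ∈ Δ_K : ∃ f ∈ C(p,μ), qᵀf = max_{q'∈Δ_K} q'ᵀf }`, where `C(p,μ)` is
the convex hull of limits of gradients along interior sequences, is nonempty, convex and
compact valued, and its graph is a closed subset of `Δ_K × Δ_X × Δ_K`. -/
theorem stmt_3 {K : ℕ} (hK : 0 < K) {X : Type*} [Fintype X] [Nonempty X]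
    (F : (Fin K → ℝ) → (X → ℝ) → ℝ) (M : ℝ)
    (hcont : ContinuousOn (fun z : (Fin K → ℝ) × (X → ℝ) => F z.1 z.2)
      ((stdSimplex ℝ (Fin K)) ×ˢ (stdSimplex ℝ X)))
    (gradp : (Fin K → ℝ) → (X → ℝ) → (Fin K → ℝ))
    (hdiff : ∀ p, (p ∈ stdSimplex ℝ (Fin K) ∧ ∀ i, 0 < p i) → ∀ μ ∈ stdSimplex ℝ X,
      ∃ L : (Fin K → ℝ) →L[ℝ] ℝ, HasFDerivAt (fun p' => F p' μ) L p ∧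
        ∀ w, L w = ∑ i, gradp p μ i * w i)
    (hbdd : ∀ p, (p ∈ stdSimplex ℝ (Fin K) ∧ ∀ i, 0 < p i) → ∀ μ ∈ stdSimplex ℝ X,
      ‖gradp p μ‖ ≤ M)
    (C : (Fin K → ℝ) → (X → ℝ) → Set (Fin K → ℝ))
    (hC : ∀ p μ, C p μ = convexHull ℝ {g : Fin K → ℝ |
      ∃ z : ℕ → (Fin K → ℝ) × (X → ℝ),
        (∀ n, ((z n).1 ∈ stdSimplex ℝ (Fin K) ∧ ∀ i, 0 < (z n).1 i) ∧
          (z n).2 ∈ stdSimplex ℝ X) ∧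
        Tendsto z atTop (nhds (p, μ)) ∧
        Tendsto (fun n => gradp (z n).1 (z n).2) atTop (nhds g)})
    (LMOp : (Fin K → ℝ) → (X → ℝ) → Set (Fin K → ℝ))
    (hLMO : ∀ p μ, LMOp p μ = convexHull ℝ {q : Fin K → ℝ | q ∈ stdSimplex ℝ (Fin K) ∧
      ∃ f ∈ C p μ, ∀ q' ∈ stdSimplex ℝ (Fin K), ∑ i, q' i * f i ≤ ∑ i, q i * f i}) :
    (∀ p ∈ stdSimplex ℝ (Fin K), ∀ μ ∈ stdSimplex ℝ X,
      (LMOp p μ).Nonempty ∧ Convex ℝ (LMOp p μ) ∧ IsCompact (LMOp p μ)) ∧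
    IsClosed {t : (Fin K → ℝ) × (X → ℝ) × (Fin K → ℝ) |
      t.1 ∈ stdSimplex ℝ (Fin K) ∧ t.2.1 ∈ stdSimplex ℝ X ∧ t.2.2 ∈ LMOp t.1 t.2.1} := by
  have hscl : IsClosed (stdSimplex ℝ (Fin K)) := isClosed_stdSimplex ℝ _
  have hscp : IsCompact (stdSimplex ℝ (Fin K)) := isCompact_stdSimplex ℝ _
  haveI : Nonempty (Fin K) := ⟨⟨0, hK⟩⟩
  let I : Set ((Fin K → ℝ) × (X → ℝ)) :=
    {z | (z.1 ∈ stdSimplex ℝ (Fin K) ∧ ∀ i, 0 < z.1 i) ∧ z.2 ∈ stdSimplex ℝ X}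
  let G : Set (((Fin K → ℝ) × (X → ℝ)) × (Fin K → ℝ)) :=
    closure ((fun z => (z, gradp z.1 z.2)) '' I)
  let B : Set (Fin K → ℝ) := Metric.closedBall 0 M
  have hB : IsCompact B := isCompact_closedBall 0 M
  have hGB : ∀ y g, (y, g) ∈ G → g ∈ B := by
    intro y g h
    have : G ⊆ {t | t.2 ∈ B} := by
      refine closure_minimal ?_ (Metric.isClosed_closedBall.preimage continuous_snd)
      rintro _ ⟨z, hz, rfl⟩
      simpa [B] using hbdd z.1 hz.1 z.2 hz.2
    exact this h
  have hCG : ∀ p μ, C p μ = convexHull ℝ {g | ((p, μ), g) ∈ G} := by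
    intro p μ
    rw [hC]
    congr 1
    ext g
    simp only [Set.mem_setOf_eq, G, mem_closure_iff_seq_limit]
    constructor
    · rintro ⟨z, h1, h2, h3⟩
      exact ⟨fun n => (z n, gradp (z n).1 (z n).2), fun n => ⟨z n, h1 n, rfl⟩,
        h2.prodMk_nhds h3⟩
    · rintro ⟨s, h1, h2⟩
      choose z hz hzs using h1
      have hs : s = fun n => (z n, gradp (z n).1 (z n).2) := by
        ext1 n; exact (hzs n).symm
      subst hs
      exact ⟨z, hz, (continuous_fst.tendsto _).comp h2, (continuous_snd.tendsto _).comp h2⟩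
  have hCcl := aux_conv G isClosed_closure B hB hGB
  have hCB : ∀ p μ, C p μ ⊆ B := by
    intro p μ
    rw [hCG]
    exact convexHull_min (fun g hg => hGB _ _ hg) (convex_closedBall 0 M)
  -- graph of argmax
  let A : Set (((Fin K → ℝ) × (X → ℝ)) × (Fin K → ℝ)) :=
    {t | t.2 ∈ stdSimplex ℝ (Fin K) ∧ ∃ f ∈ C t.1.1 t.1.2,
      ∀ q' ∈ stdSimplex ℝ (Fin K), ∑ i, q' i * f i ≤ ∑ i, t.2 i * f i}
  have hA : IsClosed A := by
    let H : Set ((((Fin K → ℝ) × (X → ℝ)) × (Fin K → ℝ)) × (Fin K → ℝ)) :=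
      {u | u.2 ∈ convexHull ℝ {g | (u.1.1, g) ∈ G}} ∩
      {u | ∀ q' ∈ stdSimplex ℝ (Fin K), ∑ i, q' i * u.2 i ≤ ∑ i, u.1.2 i * u.2 i}
    have hH : IsClosed H := by
      refine IsClosed.inter ?_ ?_
      · exact hCcl.preimage (f := fun u : (((Fin K → ℝ) × (X → ℝ)) × (Fin K → ℝ)) × (Fin K → ℝ)
          => (u.1.1, u.2)) (by fun_prop)
      · simp only [Set.setOf_forall]
        refine isClosed_iInter fun q' => isClosed_iInter fun _ => ?_
        exact isClosed_le (by fun_prop) (by fun_prop)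
    have hP := aux_proj H hH B hB
    have : A = {t | t.2 ∈ stdSimplex ℝ (Fin K)} ∩ {t | ∃ f ∈ B, (t, f) ∈ H} := by
      ext t
      constructor
      · rintro ⟨h1, f, hf, h2⟩
        exact ⟨h1, f, hCB _ _ hf, by rw [hCG] at hf; exact hf, h2⟩
      · rintro ⟨h1, f, hf, h2, h3⟩
        exact ⟨h1, f, by rw [hCG]; exact h2, h3⟩
    rw [this]
    exact (hscl.preimage continuous_snd).inter hP
  have hLA : ∀ p μ, LMOp p μ = convexHull ℝ {q | ((p, μ), q) ∈ A} := fun p μ => hLMO p μ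
  have hLcl := aux_conv A hA _ hscp (fun y g h => h.1)
  have hLs : ∀ p μ, LMOp p μ ⊆ stdSimplex ℝ (Fin K) := by
    intro p μ
    rw [hLA]
    exact convexHull_min (fun g hg => hg.1) (convex_stdSimplex ℝ _)
  refine ⟨fun p hp μ hμ => ⟨?_, ?_, ?_⟩, ?_⟩
  · -- nonempty
    have hGne : ∃ g, ((p, μ), g) ∈ G := by
      have hcl : IsClosed {y | ∃ g ∈ B, (y, g) ∈ G} := aux_proj G isClosed_closure B hB
      let w : ℝ → (Fin K → ℝ) × (X → ℝ) := fun t => ((1 - t) • p + t • (fun _ => (K : ℝ)⁻¹), μ)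
      have hw : Continuous w := by fun_prop
      have hKpos : (0 : ℝ) < K := by exact_mod_cast hK
      have hmem : ∀ t ∈ Set.Ioo (0 : ℝ) 1, w t ∈ {y | ∃ g ∈ B, (y, g) ∈ G} := by
        intro t ht
        have hpos : ∀ i, 0 < (w t).1 i := by
          intro i
          have h1 : 0 ≤ (1 - t) * p i := mul_nonneg (by linarith [ht.2]) (hp.1 i)
          have h2 : 0 < t * (K : ℝ)⁻¹ := mul_pos ht.1 (inv_pos.2 hKpos)
          simp only [w, Pi.add_apply, Pi.smul_apply, smul_eq_mul]
          linarith
        have hI : w t ∈ I := by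
          refine ⟨⟨⟨fun i => (hpos i).le, ?_⟩, hpos⟩, hμ⟩
          simp only [w, Pi.add_apply, Pi.smul_apply, smul_eq_mul, Finset.sum_add_distrib,
            ← Finset.mul_sum, hp.2]
          simp [hKpos.ne']
        have hg : (w t, gradp (w t).1 (w t).2) ∈ G := subset_closure ⟨w t, hI, rfl⟩
        exact ⟨_, hGB _ _ hg, hg⟩
      have h0 : (0 : ℝ) ∈ closure (Set.Ioo (0 : ℝ) 1) := by
        rw [closure_Ioo (by norm_num)]; simp
      have h1 : w 0 ∈ {y | ∃ g ∈ B, (y, g) ∈ G} :=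
        closure_minimal (t := w ⁻¹' {y | ∃ g ∈ B, (y, g) ∈ G}) hmem (hcl.preimage hw) h0
      obtain ⟨g, _, hg⟩ := h1
      have hw0 : w 0 = (p, μ) := by simp [w]
      rw [hw0] at hg
      exact ⟨g, hg⟩
    obtain ⟨g, hg⟩ := hGne
    obtain ⟨q, hq, hmax⟩ := hscp.exists_isMaxOn ⟨p, hp⟩
      (f := fun q : Fin K → ℝ => ∑ i, q i * g i) (by fun_prop)
    rw [hLA]
    refine ⟨q, subset_convexHull ℝ _ ⟨hq, g, ?_, fun q' hq' => hmax hq'⟩⟩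
    rw [hCG]
    exact subset_convexHull ℝ _ hg
  · rw [hLA]; exact convex_convexHull ℝ _
  · refine hscp.of_isClosed_subset ?_ (hLs p μ)
    rw [hLA]
    exact hLcl.preimage (f := fun q : Fin K → ℝ => ((p, μ), q)) (by fun_prop)
  · simp only [hLA]
    exact (hscl.preimage continuous_fst).inter
      (((isClosed_stdSimplex ℝ X).preimage (continuous_fst.comp continuous_snd)).inter
      (hLcl.preimage (f := fun t : (Fin K → ℝ) × (X → ℝ) × (Fin K → ℝ) =>
        ((t.1, t.2.1), t.2.2)) (by fun_prop)))
end

section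
/- Under the hypotheses of the continuous-time Lyapunov theorem — F twice continuously differentiable on an open set U containing the trajectory, F(·,μ) concave on Δ_K for all μ ∈ Δ_X, F(p,·) convex on Δ_X for all p ∈ Δ_K, F continuous on Δ_K × Δ_X, and (p(·),μ(·)) absolutely continuous with, for almost every t, ṗ(t) = q(t) − p(t) for some q(t) ∈ Δ_K maximizing q'ᵀ∇_p F(p(t),μ(t)) over q' ∈ Δ_K and μ̇(t) = ν(t) − μ(t) for some ν(t) ∈ Δ_X minimizing ν'ᵀ∇_μ F(p(t),μ(t)) over ν' ∈ Δ_X — the duality gap vanishes: max_{q∈Δ_K} F(q,μ(t)) − min_{ν∈Δ_X} F(p(t),ν) → 0 as t → ∞, and consequently F(p(t),μ(t)) → F*, where F* is the saddle-point value of F on Δ_K × Δ_X. -/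
open MeasureTheory

lemma aux_second {E : Type*} [NormedAddCommGroup E] [NormedSpace ℝ E] {f : E → ℝ} {z v : E}
    (hf : ContDiffAt ℝ 2 f z)
    (hc : ConvexOn ℝ (Set.Icc (0:ℝ) 1) (fun e : ℝ => f (z + e • v))) :
    0 ≤ fderiv ℝ (fderiv ℝ f) z v v := by
  have hline : ∀ e : ℝ, HasDerivAt (fun e : ℝ => z + e • v) v e := by
    intro e
    simpa using ((hasDerivAt_id e).smul_const v).const_add z
  have hd2 : DifferentiableAt ℝ (fderiv ℝ f) z :=
    (hf.fderiv_right (m := 1) (by norm_num)).differentiableAt one_ne_zero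
  have hev : ∀ᶠ y in nhds z, DifferentiableAt ℝ f y := by
    filter_upwards [hf.eventually (by simp)] with y hy using hy.differentiableAt two_ne_zero
  have hcont : Filter.Tendsto (fun e : ℝ => z + e • v) (nhds 0) (nhds z) := by
    have := (hline 0).continuousAt.tendsto
    simpa using this
  have hev2 : ∀ᶠ e : ℝ in nhds 0, HasDerivAt (fun e : ℝ => f (z + e • v))
      (fderiv ℝ f (z + e • v) v) e := by
    filter_upwards [hcont.eventually hev] with e he
    exact he.hasFDerivAt.comp_hasDerivAt e (hline e)
  have h0 := hev2.self_of_nhds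
  have hg : HasDerivAt (fun e : ℝ => fderiv ℝ f (z + e • v) v)
      (fderiv ℝ (fderiv ℝ f) z v v) 0 := by
    have h1 : HasDerivAt (fun e : ℝ => fderiv ℝ f (z + e • v)) (fderiv ℝ (fderiv ℝ f) z v) 0 := by
      have h2 : HasFDerivAt (fderiv ℝ f) (fderiv ℝ (fderiv ℝ f) z) (z + (0:ℝ) • v) := by
        simpa using hd2.hasFDerivAt
      exact h2.comp_hasDerivAt (0:ℝ) (hline 0)
    simpa using h1.clm_apply (hasDerivAt_const (0:ℝ) v)
  have hslope := (hasDerivWithinAt_iff_tendsto_slope' (s := Set.Ioi (0:ℝ)) (by simp)).1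
    (hg.hasDerivWithinAt (s := Set.Ioi (0:ℝ)))
  refine ge_of_tendsto hslope ?_
  filter_upwards [nhdsWithin_le_nhds hev2, self_mem_nhdsWithin,
    nhdsWithin_le_nhds (Iio_mem_nhds (zero_lt_one (α := ℝ)))] with e he hpos hlt
  have hpos : (0:ℝ) < e := hpos
  have hlt : e < 1 := hlt
  have a := hc.le_slope_of_hasDerivAt (by simp) ⟨hpos.le, hlt.le⟩ hpos h0
  have b := hc.slope_le_of_hasDerivAt (by simp) ⟨hpos.le, hlt.le⟩ hpos he
  rw [slope_def_field]
  exact div_nonneg (by linarith) (by linarith)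

lemma aux_first {E : Type*} [NormedAddCommGroup E] [NormedSpace ℝ E] {f : E → ℝ} {z v : E}
    (hf : DifferentiableAt ℝ f z)
    (hc : ConvexOn ℝ (Set.Icc (0:ℝ) 1) (fun e : ℝ => f (z + e • v))) :
    fderiv ℝ f z v ≤ f (z + v) - f z := by
  have hline : HasDerivAt (fun e : ℝ => z + e • v) v 0 := by
    simpa using ((hasDerivAt_id (0:ℝ)).smul_const v).const_add z
  have h0 : HasDerivAt (fun e : ℝ => f (z + e • v)) (fderiv ℝ f z v) 0 := by
    have h2 : HasFDerivAt f (fderiv ℝ f z) (z + (0:ℝ) • v) := by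
      simpa using hf.hasFDerivAt
    exact h2.comp_hasDerivAt (0:ℝ) hline
  have a := hc.le_slope_of_hasDerivAt (by simp) (by simp) one_pos h0
  simpa [slope_def_field] using a

lemma aux_lyap {E : Type*} [NormedAddCommGroup E] [NormedSpace ℝ E] {f : E → ℝ} {S U : Set E}
    (hS : IsCompact S) (hU : IsOpen U) (hf : ContDiffOn ℝ 2 f U) (J : E →L[ℝ] E)
    (z w : ℝ → E) (C : NNReal) (hz : LipschitzOnWith C z (Set.Ici 0))
    (hzS : ∀ t ≥ 0, z t ∈ S) (hzU : ∀ t ≥ 0, z t ∈ U)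
    (hae : ∀ᵐ t : ℝ, 0 < t → HasDerivAt z (w t - z t) t ∧ w t ∈ S ∧
      (∀ w' ∈ S, fderiv ℝ f (z t) (J w') ≤ fderiv ℝ f (z t) (J (w t))) ∧
      fderiv ℝ (fderiv ℝ f) (z t) (w t - z t) (J (w t - z t)) ≤ 0) :
    ∃ M : ℝ, ∀ t ≥ 0, ∀ w' ∈ S, fderiv ℝ f (z t) (J (w' - z t)) ≤ M * Real.exp (-t) := by
  have hne : S.Nonempty := ⟨_, hzS 0 le_rfl⟩
  set V : ℝ → ℝ := fun t => sSup ((fun w' => fderiv ℝ f (z t) (J (w' - z t))) '' S) with hV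
  have hbdd : ∀ t, BddAbove ((fun w' => fderiv ℝ f (z t) (J (w' - z t))) '' S) := fun t =>
    hS.bddAbove_image (by fun_prop)
  have hle : ∀ t, ∀ w' ∈ S, fderiv ℝ f (z t) (J (w' - z t)) ≤ V t := fun t w' hw' =>
    le_csSup (hbdd t) ⟨w', hw', rfl⟩
  have hVle : ∀ t a, (∀ w' ∈ S, fderiv ℝ f (z t) (J (w' - z t)) ≤ a) → V t ≤ a := by
    intro t a h
    refine csSup_le (hne.image _) ?_
    rintro _ ⟨w', hw', rfl⟩
    exact h w' hw'
  -- Lipschitz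
  have hlip : ∀ T ≥ 0, ∃ L, LipschitzOnWith L V (Set.Icc 0 T) := by
    intro T hT
    have hz' : LipschitzOnWith C z (Set.Icc 0 T) := hz.mono (fun t ht => ht.1)
    have hcomp : IsCompact (z '' Set.Icc 0 T) := isCompact_Icc.image_of_continuousOn hz'.continuousOn
    have hcd : ∀ y ∈ z '' Set.Icc 0 T, ContDiffAt ℝ 1 (fderiv ℝ f) y := by
      rintro _ ⟨t, ht, rfl⟩
      exact (hf.contDiffAt (hU.mem_nhds (hzU t ht.1))).fderiv_right (by norm_num)
    obtain ⟨L, hL⟩ := LocallyLipschitzOn.exists_lipschitzOnWith_of_compact (f := fderiv ℝ f) hcomp (by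
      intro y hy
      obtain ⟨K, t, ht, h⟩ := (hcd y hy).exists_lipschitzOnWith
      exact ⟨K, t, nhdsWithin_le_nhds ht, h⟩)
    obtain ⟨M, hM⟩ := hcomp.exists_bound_of_continuousOn hL.continuousOn
    have hM0 : 0 ≤ M := (norm_nonneg _).trans (hM _ ⟨0, ⟨le_rfl, hT⟩, rfl⟩)
    obtain ⟨R, hR⟩ := hS.exists_bound_of_continuousOn continuousOn_id
    have hR0 : 0 ≤ R := (norm_nonneg _).trans (hR _ (hzS 0 le_rfl))
    set A : ℝ := L * C * (‖J‖ * (R + R)) + M * (‖J‖ * C) with hA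
    have hA0 : 0 ≤ A := by positivity
    refine ⟨⟨A, hA0⟩, LipschitzOnWith.of_le_add_mul _ ?_⟩
    intro t ht s hs
    apply hVle
    intro w' hw'
    have e : fderiv ℝ f (z t) (J (w' - z t)) = fderiv ℝ f (z s) (J (w' - z s)) +
        (fderiv ℝ f (z t) - fderiv ℝ f (z s)) (J (w' - z t)) +
        fderiv ℝ f (z s) (J (z s - z t)) := by
      simp only [map_sub, sub_apply]; ring
    rw [e]
    have hzz : ‖z s - z t‖ ≤ C * dist t s := by
      rw [← dist_eq_norm, dist_comm]; exact hz'.dist_le_mul t ht s hs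
    have h1 : (fderiv ℝ f (z t) - fderiv ℝ f (z s)) (J (w' - z t)) ≤
        (L * (C * dist t s)) * (‖J‖ * (R + R)) := by
      refine (le_abs_self _).trans ?_
      rw [← Real.norm_eq_abs]
      refine (ContinuousLinearMap.le_opNorm _ _).trans ?_
      have h3 : ‖fderiv ℝ f (z t) - fderiv ℝ f (z s)‖ ≤ L * (C * dist t s) := by
        rw [← dist_eq_norm]
        refine (hL.dist_le_mul _ ⟨t, ht, rfl⟩ _ ⟨s, hs, rfl⟩).trans ?_
        gcongr
        exact hz'.dist_le_mul t ht s hs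
      have h4 : ‖J (w' - z t)‖ ≤ ‖J‖ * (R + R) := by
        refine (ContinuousLinearMap.le_opNorm _ _).trans ?_
        gcongr
        exact (norm_sub_le _ _).trans (add_le_add (hR _ hw') (hR _ (hzS t ht.1)))
      gcongr
    have h2 : fderiv ℝ f (z s) (J (z s - z t)) ≤ M * (‖J‖ * (C * dist t s)) := by
      refine (le_abs_self _).trans ?_
      rw [← Real.norm_eq_abs]
      refine (ContinuousLinearMap.le_opNorm _ _).trans ?_
      have h4 : ‖J (z s - z t)‖ ≤ ‖J‖ * (C * dist t s) := by
        refine (ContinuousLinearMap.le_opNorm _ _).trans ?_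
        gcongr
      have h5 := hM _ ⟨s, hs, rfl⟩
      gcongr
    have h6 := hle s w' hw'
    have h7 : A * dist t s = (L * (C * dist t s)) * (‖J‖ * (R + R)) +
      M * (‖J‖ * (C * dist t s)) := by rw [hA]; ring
    change _ ≤ V s + A * dist t s
    linarith
  -- derivative
  have hder : ∀ᵐ t : ℝ, 0 < t → DifferentiableAt ℝ V t → deriv V t ≤ - V t := by
    filter_upwards [hae] with t ht ht0 hdiff
    obtain ⟨hzd, hwS, hmax, hquad⟩ := ht ht0
    have hVt : V t = fderiv ℝ f (z t) (J (w t - z t)) := by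
      refine le_antisymm (hVle _ _ ?_) (hle t _ hwS)
      intro w' hw'
      have := hmax w' hw'
      simp only [map_sub]
      linarith
    have hd2 : DifferentiableAt ℝ (fderiv ℝ f) (z t) :=
      ((hf.contDiffAt (hU.mem_nhds (hzU t ht0.le))).fderiv_right (m := 1)
        (by norm_num)).differentiableAt one_ne_zero
    have hphi : HasDerivAt (fun s => fderiv ℝ f (z s) (J (w t - z s)))
        (fderiv ℝ (fderiv ℝ f) (z t) (w t - z t) (J (w t - z t)) +
          fderiv ℝ f (z t) (J (- (w t - z t)))) t := by
      have h1 : HasDerivAt (fun s => fderiv ℝ f (z s)) (fderiv ℝ (fderiv ℝ f) (z t) (w t - z t)) t :=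
        hd2.hasFDerivAt.comp_hasDerivAt t hzd
      have h2 : HasDerivAt (fun s => J (w t - z s)) (J (- (w t - z t))) t :=
        J.hasFDerivAt.comp_hasDerivAt t (hzd.const_sub (w t))
      exact h1.clm_apply h2
    have hmin : IsLocalMin (fun s => V s - fderiv ℝ f (z s) (J (w t - z s))) t := by
      refine Filter.Eventually.of_forall fun s => ?_
      have := hle s _ hwS
      simp only [hVt, sub_self]
      linarith
    have h0 := hmin.hasDerivAt_eq_zero (hdiff.hasDerivAt.sub hphi)
    rw [map_neg, map_neg, ← hVt] at h0
    linarith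
  refine ⟨V 0, fun T hT w' hw' => (hle T w' hw').trans ?_⟩
  obtain ⟨L, hL⟩ := hlip T hT
  have hVac : AbsolutelyContinuousOnInterval V 0 T := by
    apply LipschitzOnWith.absolutelyContinuousOnInterval (K := L)
    rwa [Set.uIcc_of_le hT]
  have hEac : AbsolutelyContinuousOnInterval Real.exp 0 T := by
    obtain ⟨K, hK⟩ := (Real.contDiff_exp (n := 1)).locallyLipschitz.locallyLipschitzOn.exists_lipschitzOnWith_of_compact
      (isCompact_uIcc (a := (0:ℝ)) (b := T))
    exact hK.absolutelyContinuousOnInterval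
  have hint := hEac.integral_deriv_mul_eq_sub hVac
  have hnonpos : ∫ x in (0:ℝ)..T, deriv Real.exp x * V x + Real.exp x * deriv V x ≤ 0 := by
    rw [intervalIntegral.integral_of_le hT]
    refine integral_nonpos_of_ae ?_
    have had := hVac.ae_differentiableAt
    rw [Filter.EventuallyLE, ae_restrict_iff' measurableSet_Ioc]
    filter_upwards [had, hder] with x hx1 hx2 hx
    have hdx := hx1 (by rw [Set.uIcc_of_le hT]; exact ⟨hx.1.le, hx.2⟩)
    have := hx2 hx.1 hdx
    have he := Real.exp_pos x
    simp only [Real.deriv_exp, Pi.zero_apply]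
    nlinarith
  rw [hint] at hnonpos
  rw [Real.exp_neg, ← div_eq_mul_inv, le_div_iff₀ (Real.exp_pos T)]
  simp at hnonpos
  linarith

lemma aux_line {E : Type*} [AddCommGroup E] [Module ℝ E] {D : Set E} {g : E → ℝ} {a b : E}
    (h : ConvexOn ℝ D g) (ha : a ∈ D) (hb : b ∈ D) :
    ConvexOn ℝ (Set.Icc (0:ℝ) 1) (fun e : ℝ => g (a + e • (b - a))) := by
  have h1 := h.comp_affineMap (AffineMap.lineMap a b : ℝ →ᵃ[ℝ] E)
  have h2 : (Set.Icc (0:ℝ) 1) ⊆ (AffineMap.lineMap a b : ℝ →ᵃ[ℝ] E) ⁻¹' D := by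
    intro e he
    exact h.1.lineMap_mem ha hb he
  have h3 := h1.subset h2 (convex_Icc 0 1)
  refine h3.congr ?_
  intro e _
  simp [AffineMap.lineMap_apply, add_comm]

lemma aux_norm {ι : Type*} [Fintype ι] {x y : ι → ℝ} (hx : x ∈ stdSimplex ℝ ι)
    (hy : y ∈ stdSimplex ℝ ι) : ‖x - y‖ ≤ 1 := by
  rw [pi_norm_le_iff_of_nonneg zero_le_one]
  intro i
  have h1 := mem_Icc_of_mem_stdSimplex hx i
  have h2 := mem_Icc_of_mem_stdSimplex hy i
  rw [Real.norm_eq_abs, abs_le, Pi.sub_apply]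
  constructor <;> linarith [h1.1, h1.2, h2.1, h2.2]

lemma aux_ode {ι : Type*} [Fintype ι] (p q : ℝ → ι → ℝ) (hq : Measurable q)
    (hpc : ContinuousOn p (Set.Ici (0:ℝ))) (hp : ∀ t ≥ (0:ℝ), p t ∈ stdSimplex ℝ ι)
    (hqm : ∀ᵐ t ∂(volume.restrict (Set.Ici (0 : ℝ))), q t ∈ stdSimplex ℝ ι)
    (hode : ∀ t ≥ (0 : ℝ), p t = p 0 + ∫ s in (0 : ℝ)..t, (q s - p s)) :
    LipschitzOnWith 1 p (Set.Ici 0) ∧ ∀ᵐ t : ℝ, 0 < t → HasDerivAt p (q t - p t) t := by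
  have hb : ∀ᵐ t : ℝ, t ∈ Set.Ici (0:ℝ) → ‖q t - p t‖ ≤ 1 := by
    rw [ae_restrict_iff' measurableSet_Ici] at hqm
    filter_upwards [hqm] with t ht ht0 using aux_norm (ht ht0) (hp t ht0)
  have hint : ∀ T ≥ (0:ℝ), IntervalIntegrable (fun s => q s - p s) volume 0 T := by
    intro T hT
    rw [intervalIntegrable_iff_integrableOn_Icc_of_le hT]
    refine ⟨?_, ?_⟩
    · exact hq.aestronglyMeasurable.sub
        ((hpc.mono (fun t ht => ht.1)).aestronglyMeasurable measurableSet_Icc)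
    · refine HasFiniteIntegral.restrict_of_bounded (C := 1) (by simp) ?_
      rw [ae_restrict_iff' measurableSet_Icc]
      filter_upwards [hb] with t ht h using ht h.1
  constructor
  · refine LipschitzOnWith.of_dist_le_mul ?_
    intro t ht s hs
    have ht : 0 ≤ t := ht
    have hs : 0 ≤ s := hs
    rw [dist_eq_norm, hode t ht, hode s hs, add_sub_add_left_eq_sub,
      intervalIntegral.integral_interval_sub_left (hint t ht) (hint s hs)]
    have := intervalIntegral.norm_integral_le_of_norm_le_const_ae (a := s) (b := t) (C := 1)
      (f := fun s => q s - p s) (by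
        filter_upwards [hb] with x hx hx2
        apply hx
        rcases Set.mem_uIoc.1 hx2 with h | h
        · exact hs.trans h.1.le
        · exact ht.trans h.1.le)
    simpa [Real.dist_eq] using this
  · have h : ∀ n : ℕ, ∀ᵐ x : ℝ, x ∈ Set.uIcc (0:ℝ) n → ∀ c ∈ Set.uIcc (0:ℝ) n,
        HasDerivAt (fun x => ∫ t in c..x, (q t - p t)) (q x - p x) x := fun n =>
      (hint n (Nat.cast_nonneg n)).ae_hasDerivAt_integral
    rw [← ae_all_iff] at h
    filter_upwards [h] with t ht ht0
    obtain ⟨n, hn⟩ := exists_nat_ge t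
    have h1 := ht n (Set.mem_uIcc_of_le ht0.le hn) 0 (by simp)
    refine (h1.const_add (p 0)).congr_of_eventuallyEq ?_
    filter_upwards [lt_mem_nhds ht0] with s hs using hode s hs.le

lemma aux_point {P Q : Type*} [NormedAddCommGroup P] [NormedSpace ℝ P]
    [NormedAddCommGroup Q] [NormedSpace ℝ Q] {F : P → Q → ℝ} {A : Set P} {B : Set Q}
    {p q : P} {μ ν : Q} (hp : p ∈ A) (hq : q ∈ A) (hμ : μ ∈ B) (hν : ν ∈ B)
    (hf : ContDiffAt ℝ 2 (fun z : P × Q => F z.1 z.2) (p, μ))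
    (hconc : ConcaveOn ℝ A (fun p' => F p' μ)) (hconv : ConvexOn ℝ B (fun μ' => F p μ')) :
    fderiv ℝ (fderiv ℝ (fun z : P × Q => F z.1 z.2)) (p, μ) (q - p, ν - μ) (q - p, -(ν - μ)) ≤ 0 ∧
    F q μ - F p ν ≤ fderiv ℝ (fun z : P × Q => F z.1 z.2) (p, μ) (q - p, -(ν - μ)) := by
  set f : P × Q → ℝ := fun z => F z.1 z.2 with hfd
  have hdf : DifferentiableAt ℝ f (p, μ) := hf.differentiableAt two_ne_zero
  have c1 : ConvexOn ℝ (Set.Icc (0:ℝ) 1) (fun e : ℝ => f ((p, μ) + e • ((0 : P), ν - μ))) := by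
    have := aux_line hconv hμ hν
    simpa [hfd] using this
  have c2 : ConvexOn ℝ (Set.Icc (0:ℝ) 1) (fun e : ℝ => (-f) ((p, μ) + e • (q - p, (0 : Q)))) := by
    have := aux_line hconc.neg hp hq
    simpa [hfd] using this
  have d1 : fderiv ℝ (-f) = - fderiv ℝ f := by
    funext y; simp [fderiv_neg]
  have d2 : fderiv ℝ (fderiv ℝ (-f)) (p, μ) = - fderiv ℝ (fderiv ℝ f) (p, μ) := by
    rw [d1, fderiv_neg]
  have s1 := aux_second hf c1
  have s2 := aux_second (f := -f) hf.neg c2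
  have t1 := aux_first hdf c1
  have t2 := aux_first hdf.neg c2
  rw [d2] at s2
  rw [d1] at t2
  have hsymm := hf.isSymmSndFDerivAt (by simp)
  have e1 : (q - p, ν - μ) = (q - p, (0:Q)) + ((0:P), ν - μ) := by simp
  have e2 : (q - p, -(ν - μ)) = (q - p, (0:Q)) - ((0:P), ν - μ) := by simp
  have hs := hsymm (q - p, (0:Q)) ((0:P), ν - μ)
  rw [e1, e2]
  simp only [map_add, map_sub, add_apply, neg_apply, Pi.neg_apply] at *
  constructor
  · linarith
  · simp [hfd] at t1 t2 ⊢
    linarith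


/-- Under the hypotheses of the continuous-time Lyapunov theorem (`F` twice
continuously differentiable on an open set `U` containing the trajectory, concave–convex
on `Δ_K × Δ_X`, continuous on `Δ_K × Δ_X`, and the Frank–Wolfe self-play dynamics in
integral form with a.e. best-response selections), the duality gap
`max_{q∈Δ_K} F(q,μ(t)) − min_{ν∈Δ_X} F(p(t),ν)` vanishes as `t → ∞`, and consequently
`F(p(t),μ(t)) → F*`, the saddle-point value `sup_{p∈Δ_K} inf_{μ∈Δ_X} F(p,μ)`. -/
theorem stmt_8 {K : ℕ} (hK : 0 < K) {X : Type*} [Fintype X] [Nonempty X]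
    (F : (Fin K → ℝ) → (X → ℝ) → ℝ)
    (hFcont : ContinuousOn (fun z : (Fin K → ℝ) × (X → ℝ) => F z.1 z.2)
      ((stdSimplex ℝ (Fin K)) ×ˢ (stdSimplex ℝ X)))
    (U : Set ((Fin K → ℝ) × (X → ℝ))) (hU : IsOpen U)
    (hF : ContDiffOn ℝ 2 (fun z : (Fin K → ℝ) × (X → ℝ) => F z.1 z.2) U)
    (hconc : ∀ μ ∈ stdSimplex ℝ X, ConcaveOn ℝ (stdSimplex ℝ (Fin K)) (fun p' => F p' μ))
    (hconv : ∀ p ∈ stdSimplex ℝ (Fin K), ConvexOn ℝ (stdSimplex ℝ X) (fun μ' => F p μ'))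
    (gradp : (Fin K → ℝ) → (X → ℝ) → (Fin K → ℝ))
    (gradm : (Fin K → ℝ) → (X → ℝ) → (X → ℝ))
    (hgradp : ∀ z ∈ U, ∃ L : (Fin K → ℝ) →L[ℝ] ℝ,
      HasFDerivAt (fun p' => F p' z.2) L z.1 ∧ ∀ w, L w = ∑ i, gradp z.1 z.2 i * w i)
    (hgradm : ∀ z ∈ U, ∃ L : (X → ℝ) →L[ℝ] ℝ,
      HasFDerivAt (fun μ' => F z.1 μ') L z.2 ∧ ∀ w, L w = ∑ x, gradm z.1 z.2 x * w x)
    (p : ℝ → (Fin K → ℝ)) (μ : ℝ → (X → ℝ))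
    (q : ℝ → (Fin K → ℝ)) (ν : ℝ → (X → ℝ))
    (hmem : ∀ t ≥ (0 : ℝ), p t ∈ stdSimplex ℝ (Fin K) ∧ μ t ∈ stdSimplex ℝ X ∧
      (p t, μ t) ∈ U)
    (hqmeas : Measurable q) (hνmeas : Measurable ν)
    (hpc : ContinuousOn p (Set.Ici (0 : ℝ))) (hμc : ContinuousOn μ (Set.Ici (0 : ℝ)))
    (hsel : ∀ᵐ t ∂(volume.restrict (Set.Ici (0 : ℝ))),
      (q t ∈ stdSimplex ℝ (Fin K) ∧ ∀ q' ∈ stdSimplex ℝ (Fin K),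
        ∑ i, q' i * gradp (p t) (μ t) i ≤ ∑ i, q t i * gradp (p t) (μ t) i) ∧
      (ν t ∈ stdSimplex ℝ X ∧ ∀ ν' ∈ stdSimplex ℝ X,
        ∑ x, ν t x * gradm (p t) (μ t) x ≤ ∑ x, ν' x * gradm (p t) (μ t) x))
    (hodep : ∀ t ≥ (0 : ℝ), p t = p 0 + ∫ s in (0 : ℝ)..t, (q s - p s))
    (hodeμ : ∀ t ≥ (0 : ℝ), μ t = μ 0 + ∫ s in (0 : ℝ)..t, (ν s - μ s)) :
    Filter.Tendsto (fun t =>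
        (⨆ qq : stdSimplex ℝ (Fin K), F qq.1 (μ t)) -
        (⨅ νν : stdSimplex ℝ X, F (p t) νν.1))
      Filter.atTop (nhds 0) ∧
    Filter.Tendsto (fun t => F (p t) (μ t)) Filter.atTop
      (nhds (⨆ pp : stdSimplex ℝ (Fin K), ⨅ mm : stdSimplex ℝ X, F pp.1 mm.1)) := by
  classical
  have : Nonempty (Fin K) := ⟨⟨0, hK⟩⟩
  set f : (Fin K → ℝ) × (X → ℝ) → ℝ := fun z => F z.1 z.2 with hfd
  have hA : IsCompact (stdSimplex ℝ (Fin K)) := isCompact_stdSimplex ℝ (Fin K)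
  have hB : IsCompact (stdSimplex ℝ X) := isCompact_stdSimplex ℝ X
  have hS : IsCompact ((stdSimplex ℝ (Fin K)) ×ˢ (stdSimplex ℝ X)) := hA.prod hB
  obtain ⟨R, hR⟩ := hS.exists_bound_of_continuousOn hFcont
  have hR' : ∀ a ∈ stdSimplex ℝ (Fin K), ∀ b ∈ stdSimplex ℝ X, |F a b| ≤ R :=
    fun a ha b hb => hR (a, b) ⟨ha, hb⟩
  have : Nonempty (stdSimplex ℝ (Fin K)) := ⟨⟨_, (hmem 0 le_rfl).1⟩⟩
  have : Nonempty (stdSimplex ℝ X) := ⟨⟨_, (hmem 0 le_rfl).2.1⟩⟩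
  -- bounded families
  have bA : ∀ b ∈ stdSimplex ℝ X, BddAbove (Set.range fun a : stdSimplex ℝ (Fin K) => F a.1 b) := by
    intro b hb
    refine ⟨R, ?_⟩
    rintro _ ⟨a, rfl⟩
    exact (abs_le.1 (hR' _ a.2 _ hb)).2
  have bB : ∀ a ∈ stdSimplex ℝ (Fin K), BddBelow (Set.range fun b : stdSimplex ℝ X => F a b.1) := by
    intro a ha
    refine ⟨-R, ?_⟩
    rintro _ ⟨b, rfl⟩
    exact (abs_le.1 (hR' _ ha _ b.2)).1
  have bI : BddAbove (Set.range fun a : stdSimplex ℝ (Fin K) => ⨅ b : stdSimplex ℝ X, F a.1 b.1) := by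
    refine ⟨R, ?_⟩
    rintro _ ⟨a, rfl⟩
    have b : stdSimplex ℝ X := Classical.arbitrary _
    exact (ciInf_le (bB _ a.2) b).trans (abs_le.1 (hR' _ a.2 _ b.2)).2
  have hcd : ∀ t ≥ (0:ℝ), ContDiffAt ℝ 2 f (p t, μ t) := fun t ht =>
    hF.contDiffAt (hU.mem_nhds (hmem t ht).2.2)
  have hpt : ∀ t ≥ (0:ℝ), ∀ a ∈ stdSimplex ℝ (Fin K), ∀ b ∈ stdSimplex ℝ X, _ :=
    fun t ht a ha b hb => aux_point (hmem t ht).1 ha (hmem t ht).2.1 hb (hcd t ht)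
      (hconc _ (hmem t ht).2.1) (hconv _ (hmem t ht).1)
  obtain ⟨lp, dp⟩ := aux_ode p q hqmeas hpc (fun t ht => (hmem t ht).1)
    (by filter_upwards [hsel] with t ht using ht.1.1) hodep
  obtain ⟨lm, dm⟩ := aux_ode μ ν hνmeas hμc (fun t ht => (hmem t ht).2.1)
    (by filter_upwards [hsel] with t ht using ht.2.1) hodeμ
  have hgrad : ∀ t ≥ (0:ℝ), ∀ a b, fderiv ℝ f (p t, μ t) (a, -b) =
      ∑ i, a i * gradp (p t) (μ t) i - ∑ x, b x * gradm (p t) (μ t) x := by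
    intro t ht a b
    have hd := ((hcd t ht).differentiableAt two_ne_zero).hasFDerivAt
    obtain ⟨L1, hL1, hL1'⟩ := hgradp _ (hmem t ht).2.2
    obtain ⟨L2, hL2, hL2'⟩ := hgradm _ (hmem t ht).2.2
    have k1 := HasFDerivAt.comp (p t) hd (hasFDerivAt_prodMk_left (𝕜 := ℝ) (p t) (μ t))
    have k2 := HasFDerivAt.comp (μ t) hd (hasFDerivAt_prodMk_right (𝕜 := ℝ) (p t) (μ t))
    have u1 := HasFDerivAt.unique hL1 k1
    have u2 := HasFDerivAt.unique hL2 k2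
    have v1 := hL1' a
    have v2 := hL2' b
    rw [u1] at v1
    rw [u2] at v2
    simp at v1 v2
    have e : (a, -b) = (a, (0 : X → ℝ)) - ((0 : Fin K → ℝ), b) := by simp
    rw [e, map_sub, v1, v2]
    simp only [mul_comm]
  obtain ⟨M, hM⟩ := aux_lyap hS hU hF
    ((ContinuousLinearMap.fst ℝ (Fin K → ℝ) (X → ℝ)).prod
      (-(ContinuousLinearMap.snd ℝ (Fin K → ℝ) (X → ℝ))))
    (fun t => (p t, μ t)) (fun t => (q t, ν t)) _ (lp.prodMk lm)
    (fun t ht => ⟨(hmem t ht).1, (hmem t ht).2.1⟩) (fun t ht => (hmem t ht).2.2) (by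
      rw [ae_restrict_iff' measurableSet_Ici] at hsel
      filter_upwards [hsel, dp, dm] with t hs h1 h2 ht
      obtain ⟨⟨s1, s2⟩, s3, s4⟩ := hs ht.le
      refine ⟨(h1 ht).prodMk (h2 ht), ⟨s1, s3⟩, ?_, ?_⟩
      · rintro ⟨a, b⟩ ⟨ha, hb⟩
        have g1 := hgrad t ht.le a b
        have g2 := hgrad t ht.le (q t) (ν t)
        have g3 := s2 a ha
        have g4 := s4 b hb
        simp only [ContinuousLinearMap.prod_apply, ContinuousLinearMap.coe_fst', neg_apply,
          ContinuousLinearMap.coe_snd']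
        rw [g1, g2]
        linarith
      · exact (hpt t ht.le _ s1 _ s3).1)
  have hgap : ∀ t ≥ (0:ℝ), (⨆ qq : stdSimplex ℝ (Fin K), F qq.1 (μ t)) -
        (⨅ νν : stdSimplex ℝ X, F (p t) νν.1) ≤ M * Real.exp (-t) := by
    intro t ht
    have h1 : ∀ a : stdSimplex ℝ (Fin K), ∀ b : stdSimplex ℝ X,
        F a.1 (μ t) - F (p t) b.1 ≤ M * Real.exp (-t) := fun a b =>
      (hpt t ht _ a.2 _ b.2).2.trans (hM t ht (a.1, b.1) ⟨a.2, b.2⟩)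
    have h2 : (⨆ qq : stdSimplex ℝ (Fin K), F qq.1 (μ t)) ≤
        M * Real.exp (-t) + (⨅ νν : stdSimplex ℝ X, F (p t) νν.1) := by
      refine ciSup_le fun a => ?_
      rw [← sub_le_iff_le_add']
      refine le_ciInf fun b => ?_
      linarith [h1 a b]
    linarith
  have hsup : ∀ t ≥ (0:ℝ), F (p t) (μ t) ≤ ⨆ qq : stdSimplex ℝ (Fin K), F qq.1 (μ t) :=
    fun t ht => le_ciSup (bA _ (hmem t ht).2.1) ⟨p t, (hmem t ht).1⟩
  have hinf : ∀ t ≥ (0:ℝ), (⨅ νν : stdSimplex ℝ X, F (p t) νν.1) ≤ F (p t) (μ t) :=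
    fun t ht => ciInf_le (bB _ (hmem t ht).1) ⟨μ t, (hmem t ht).2.1⟩
  have hs1 : ∀ t ≥ (0:ℝ), (⨅ νν : stdSimplex ℝ X, F (p t) νν.1) ≤
      ⨆ pp : stdSimplex ℝ (Fin K), ⨅ mm : stdSimplex ℝ X, F pp.1 mm.1 :=
    fun t ht => le_ciSup bI ⟨p t, (hmem t ht).1⟩
  have hs2 : ∀ t ≥ (0:ℝ), (⨆ pp : stdSimplex ℝ (Fin K), ⨅ mm : stdSimplex ℝ X, F pp.1 mm.1) ≤
      ⨆ qq : stdSimplex ℝ (Fin K), F qq.1 (μ t) :=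
    fun t ht => ciSup_mono (bA _ (hmem t ht).2.1)
      (fun a => ciInf_le (bB _ a.2) ⟨μ t, (hmem t ht).2.1⟩)
  have hlim : Filter.Tendsto (fun t => M * Real.exp (-t)) Filter.atTop (nhds 0) := by
    simpa using Real.tendsto_exp_neg_atTop_nhds_zero.const_mul M
  constructor
  · refine squeeze_zero' ?_ ?_ hlim
    · filter_upwards [Filter.eventually_ge_atTop (0:ℝ)] with t ht
      linarith [hsup t ht, hinf t ht]
    · filter_upwards [Filter.eventually_ge_atTop (0:ℝ)] with t ht using hgap t ht
  · rw [tendsto_iff_dist_tendsto_zero]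
    refine squeeze_zero' (Filter.Eventually.of_forall fun t => dist_nonneg) ?_ hlim
    filter_upwards [Filter.eventually_ge_atTop (0:ℝ)] with t ht
    rw [Real.dist_eq, abs_le]
    constructor <;> linarith [hsup t ht, hinf t ht, hs1 t ht, hs2 t ht, hgap t ht]
end

section
/- Consider Gaussian BAI and define F(p,μ) = Σ_{x∈X} μ_x D(p,x). For (p,μ) ∈ Δ_K × Δ_X let C(p,μ) = conv{ f : there exist p_n ∈ int Δ_K with p_n → p and ∇_p F(p_n,μ) → f }, LMO_p(p,μ) = conv{ e_i : there exists f ∈ C(p,μ) with f_i = max_j f_j }, and LMO_μ(p,μ) = conv{ e_x : D(p,x) = min_{x'∈X} D(p,x') }, where e_i denotes the i-th standard basis vector. Set κ_min = min_{x∈X} (θ_{I*}−θ_x)²/(8σ²), M = max_{x∈X} (θ_{I*}−θ_x)²/(2σ²), ε₀ = min{1/2, κ_min/(4KM)}, and T* = (K−1)(log(1/ε₀) + log 2). Then every absolutely continuous solution (p(·),μ(·)) : [0,∞) → Δ_K × Δ_X satisfying, for almost every t, ṗ(t) = q(t) − p(t) with q(t) ∈ LMO_p(p(t),μ(t)) and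 μ̇(t) = ν(t) − μ(t) with ν(t) ∈ LMO_μ(p(t),μ(t)), started from any (p(0),μ(0)) ∈ Δ_K × Δ_X, satisfies p(t) ∈ int Δ_K (all coordinates strictly positive) for every t > T*. -/
open Filter MeasureTheory

noncomputable section

/-- The relative interior of the standard simplex. -/
def simplexInterior (K : ℕ) : Set (Fin K → ℝ) :=
  {p | p ∈ stdSimplex ℝ (Fin K) ∧ ∀ i, 0 < p i}

/-- Gaussian best-arm-identification payoff. -/
def Dg {K : ℕ} (θ : Fin K → ℝ) (σ : ℝ) (Istar : Fin K)
    (p : Fin K → ℝ) (x : Fin K) : ℝ :=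
  if 0 < p Istar + p x then
    ((θ Istar - θ x) ^ 2 / (2 * σ ^ 2)) * (p Istar * p x / (p Istar + p x))
  else 0

/-- The mixed payoff `F(p,μ) = ∑_{x∈X} μ_x D(p,x)` over scenarios `X = [K] \ {I*}`. -/
def Fg {K : ℕ} (θ : Fin K → ℝ) (σ : ℝ) (Istar : Fin K)
    (p : Fin K → ℝ) (μ : {x : Fin K // x ≠ Istar} → ℝ) : ℝ :=
  ∑ x : {x : Fin K // x ≠ Istar}, μ x * Dg θ σ Istar p x.1

/-- Gradient of `F` in `p`, obtained from the Fréchet derivative. -/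
def gradFg {K : ℕ} (θ : Fin K → ℝ) (σ : ℝ) (Istar : Fin K)
    (p : Fin K → ℝ) (μ : {x : Fin K // x ≠ Istar} → ℝ) : Fin K → ℝ :=
  fun i => fderiv ℝ (fun p' => Fg θ σ Istar p' μ) p (Pi.single i 1)

/-- `C(p,μ)`: convex hull of limits of gradients `∇_p F(p_n, μ)` along interior
sequences `p_n → p`. -/
def Cg {K : ℕ} (θ : Fin K → ℝ) (σ : ℝ) (Istar : Fin K)
    (p : Fin K → ℝ) (μ : {x : Fin K // x ≠ Istar} → ℝ) : Set (Fin K → ℝ) :=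
  convexHull ℝ {f : Fin K → ℝ | ∃ pn : ℕ → (Fin K → ℝ),
    (∀ n, pn n ∈ simplexInterior K) ∧
    Tendsto pn atTop (nhds p) ∧
    Tendsto (fun n => gradFg θ σ Istar (pn n) μ) atTop (nhds f)}

/-- `LMO_p(p,μ) = conv{ e_i : ∃ f ∈ C(p,μ), f_i = max_j f_j }`. -/
def LMOpg {K : ℕ} (θ : Fin K → ℝ) (σ : ℝ) (Istar : Fin K)
    (p : Fin K → ℝ) (μ : {x : Fin K // x ≠ Istar} → ℝ) : Set (Fin K → ℝ) :=
  convexHull ℝ {e : Fin K → ℝ | ∃ i : Fin K, e = Pi.single i 1 ∧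
    ∃ f ∈ Cg θ σ Istar p μ, ∀ j, f j ≤ f i}

/-- `LMO_μ(p,μ) = conv{ e_x : D(p,x) = min_{x'} D(p,x') }`. -/
def LMOmug {K : ℕ} (θ : Fin K → ℝ) (σ : ℝ) (Istar : Fin K)
    (p : Fin K → ℝ) : Set ({x : Fin K // x ≠ Istar} → ℝ) :=
  convexHull ℝ {e : {x : Fin K // x ≠ Istar} → ℝ | ∃ x : {x : Fin K // x ≠ Istar},
    e = Pi.single x 1 ∧ ∀ x' : {x : Fin K // x ≠ Istar},
      Dg θ σ Istar p x.1 ≤ Dg θ σ Istar p x'.1}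


def Gg {K : ℕ} (θ : Fin K → ℝ) (σ : ℝ) (Istar : Fin K)
    (p : Fin K → ℝ) (μ : {x : Fin K // x ≠ Istar} → ℝ) (i : Fin K) : ℝ :=
  ∑ x : {x : Fin K // x ≠ Istar}, μ x * (((θ Istar - θ x.1) ^ 2 / (2 * σ ^ 2)) *
    (((if i = Istar then p x.1 ^ 2 else 0) + (if i = x.1 then p Istar ^ 2 else 0)) /
      (p Istar + p x.1) ^ 2))

lemma grad_eq {K : ℕ} (θ : Fin K → ℝ) (σ : ℝ) (Istar : Fin K)
    (p : Fin K → ℝ) (μ : {x : Fin K // x ≠ Istar} → ℝ) (hp : ∀ i, 0 < p i) :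
    gradFg θ σ Istar p μ = Gg θ σ Istar p μ := by
  have hD : ∀ x : {x : Fin K // x ≠ Istar}, ∃ L : (Fin K → ℝ) →L[ℝ] ℝ,
      HasFDerivAt (fun p' => Dg θ σ Istar p' x.1) L p ∧ ∀ i, L (Pi.single i 1) =
        (((θ Istar - θ x.1) ^ 2 / (2 * σ ^ 2)) *
    (((if i = Istar then p x.1 ^ 2 else 0) + (if i = x.1 then p Istar ^ 2 else 0)) /
      (p Istar + p x.1) ^ 2)) := by
    intro x
    have h1 : HasFDerivAt (fun p' : Fin K → ℝ => p' Istar) (ContinuousLinearMap.proj Istar : (Fin K → ℝ) →L[ℝ] ℝ) p :=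
      (ContinuousLinearMap.proj Istar : (Fin K → ℝ) →L[ℝ] ℝ).hasFDerivAt
    have h2 : HasFDerivAt (fun p' : Fin K → ℝ => p' x.1) (ContinuousLinearMap.proj x.1 : (Fin K → ℝ) →L[ℝ] ℝ) p :=
      (ContinuousLinearMap.proj x.1 : (Fin K → ℝ) →L[ℝ] ℝ).hasFDerivAt
    have hs : 0 < p Istar + p x.1 := add_pos (hp _) (hp _)
    have h3 := (((h1.mul h2).mul ((hasDerivAt_inv hs.ne').comp_hasFDerivAt p (h1.add h2)))).const_mul
      ((θ Istar - θ x.1) ^ 2 / (2 * σ ^ 2))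
    refine ⟨_, h3.congr_of_eventuallyEq ?_, ?_⟩
    · have : ∀ᶠ p' : Fin K → ℝ in nhds p, 0 < p' Istar + p' x.1 :=
        (((continuous_apply Istar).add (continuous_apply x.1)).continuousAt).eventually
          (lt_mem_nhds hs)
      filter_upwards [this] with p' hp'
      simp [Dg, hp', div_eq_mul_inv]
    · intro i
      have hne := hs.ne'
      have hxI := x.2
      have e1 : (Pi.single i (1:ℝ) : Fin K → ℝ) Istar = if i = Istar then 1 else 0 := by
        rw [Pi.single_apply]; simp [eq_comm]
      have e2 : (Pi.single i (1:ℝ) : Fin K → ℝ) x.1 = if i = x.1 then 1 else 0 := by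
        rw [Pi.single_apply]; simp [eq_comm]
      simp only [smul_apply, add_apply,
        ContinuousLinearMap.proj_apply, smul_eq_mul, e1, e2, Pi.add_apply, Pi.mul_apply, Function.comp]
      congr 1
      split_ifs <;> field_simp <;> ring
  choose L hL hL' using hD
  have hF : HasFDerivAt (fun p' => Fg θ σ Istar p' μ) (∑ x, μ x • L x) p := by
    unfold Fg
    exact HasFDerivAt.fun_sum fun x _ => (hL x).const_mul (μ x)
  funext i
  simp [gradFg, hF.fderiv, Gg, hL']

/-- closed half-space conditions pass to `C`. -/
lemma C_lin {K : ℕ} (θ : Fin K → ℝ) (σ : ℝ) (Istar : Fin K)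
    (p : Fin K → ℝ) (μ : {x : Fin K // x ≠ Istar} → ℝ)
    (φ : (Fin K → ℝ) →L[ℝ] ℝ) (h : (Fin K → ℝ) → ℝ) (hc : ContinuousAt h p)
    (hle : ∀ p', (∀ i, 0 < p' i) → φ (Gg θ σ Istar p' μ) ≤ h p') :
    ∀ f ∈ Cg θ σ Istar p μ, φ f ≤ h p := by
  have hconv : Convex ℝ {f | φ f ≤ h p} := convex_halfSpace_le φ.isLinear _
  intro f hf
  refine convexHull_min ?_ hconv hf
  rintro g ⟨pn, hpn, ht, hg⟩
  refine le_of_tendsto_of_tendsto ((φ.continuous.tendsto g).comp hg) (hc.tendsto.comp ht) ?_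
  refine Eventually.of_forall fun n => ?_
  have := hle (pn n) (hpn n).2
  simpa [grad_eq θ σ Istar (pn n) μ (hpn n).2] using this

lemma Gg_x {K : ℕ} (θ : Fin K → ℝ) (σ : ℝ) (Istar : Fin K)
    (p : Fin K → ℝ) (μ : {x : Fin K // x ≠ Istar} → ℝ) (x : {x : Fin K // x ≠ Istar}) :
    Gg θ σ Istar p μ x.1 = μ x * (((θ Istar - θ x.1) ^ 2 / (2 * σ ^ 2)) *
      (p Istar ^ 2 / (p Istar + p x.1) ^ 2)) := by
  unfold Gg
  rw [Finset.sum_eq_single x]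
  · simp [x.2]
  · intro y _ hy
    have : x.1 ≠ y.1 := fun h => hy (Subtype.ext h.symm)
    simp [x.2, this]
  · simp

lemma Gg_I {K : ℕ} (θ : Fin K → ℝ) (σ : ℝ) (Istar : Fin K)
    (p : Fin K → ℝ) (μ : {x : Fin K // x ≠ Istar} → ℝ) :
    Gg θ σ Istar p μ Istar = ∑ x : {x : Fin K // x ≠ Istar},
      μ x * (((θ Istar - θ x.1) ^ 2 / (2 * σ ^ 2)) *
      (p x.1 ^ 2 / (p Istar + p x.1) ^ 2)) := by
  unfold Gg
  refine Finset.sum_congr rfl fun x _ => ?_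
  simp [x.2.symm]

/-- value of coordinates `x`. -/
lemma C_x {K : ℕ} (θ : Fin K → ℝ) (σ : ℝ) (Istar : Fin K)
    (p : Fin K → ℝ) (μ : {x : Fin K // x ≠ Istar} → ℝ) (x : {x : Fin K // x ≠ Istar})
    (hp : 0 < p Istar + p x.1) (f) (hf : f ∈ Cg θ σ Istar p μ) :
    f x.1 = μ x * (((θ Istar - θ x.1) ^ 2 / (2 * σ ^ 2)) *
      (p Istar ^ 2 / (p Istar + p x.1) ^ 2)) := by
  have hc : ContinuousAt (fun p : Fin K → ℝ => μ x * (((θ Istar - θ x.1) ^ 2 / (2 * σ ^ 2)) *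
      (p Istar ^ 2 / (p Istar + p x.1) ^ 2))) p := by
    have : (p Istar + p x.1) ^ 2 ≠ 0 := by positivity
    fun_prop (disch := assumption)
  apply le_antisymm
  · exact C_lin θ σ Istar p μ (ContinuousLinearMap.proj x.1) _ hc
      (fun p' _ => (Gg_x θ σ Istar p' μ x).le) f hf
  · have := C_lin θ σ Istar p μ (-ContinuousLinearMap.proj x.1) _ hc.neg
      (fun p' _ => by simp [Gg_x θ σ Istar p' μ x]) f hf
    simpa using this

lemma C_I {K : ℕ} (θ : Fin K → ℝ) (σ : ℝ) (Istar : Fin K)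
    (p : Fin K → ℝ) (μ : {x : Fin K // x ≠ Istar} → ℝ)
    (hp : ∀ x : {x : Fin K // x ≠ Istar}, 0 < p Istar + p x.1) (f) (hf : f ∈ Cg θ σ Istar p μ) :
    f Istar ≤ ∑ x : {x : Fin K // x ≠ Istar},
      μ x * (((θ Istar - θ x.1) ^ 2 / (2 * σ ^ 2)) *
      (p x.1 ^ 2 / (p Istar + p x.1) ^ 2)) := by
  have hc : ContinuousAt (fun p : Fin K → ℝ => ∑ x : {x : Fin K // x ≠ Istar},
      μ x * (((θ Istar - θ x.1) ^ 2 / (2 * σ ^ 2)) *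
      (p x.1 ^ 2 / (p Istar + p x.1) ^ 2))) p := by
    refine tendsto_finsetSum _ fun x _ => ?_
    change ContinuousAt (fun p : Fin K → ℝ => μ x * (((θ Istar - θ x.1) ^ 2 / (2 * σ ^ 2)) *
      (p x.1 ^ 2 / (p Istar + p x.1) ^ 2))) p
    have : (p Istar + p x.1) ^ 2 ≠ 0 := by have := hp x; positivity
    fun_prop (disch := assumption)
  exact C_lin θ σ Istar p μ (ContinuousLinearMap.proj Istar) _ hc
      (fun p' _ => (Gg_I θ σ Istar p' μ).le) f hf

lemma C_sum {K : ℕ} (θ : Fin K → ℝ) (σ : ℝ) (Istar : Fin K)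
    (p : Fin K → ℝ) (μ : {x : Fin K // x ≠ Istar} → ℝ) (hμ : ∀ x, 0 ≤ μ x)
    (f) (hf : f ∈ Cg θ σ Istar p μ) :
    ∑ x : {x : Fin K // x ≠ Istar}, μ x * (((θ Istar - θ x.1) ^ 2 / (2 * σ ^ 2)) * (1 / 2)) ≤
      f Istar + ∑ x : {x : Fin K // x ≠ Istar}, f x.1 := by
  have := C_lin θ σ Istar p μ (-(ContinuousLinearMap.proj Istar +
      ∑ x : {x : Fin K // x ≠ Istar}, ContinuousLinearMap.proj x.1))
    (fun _ => -∑ x : {x : Fin K // x ≠ Istar}, μ x * (((θ Istar - θ x.1) ^ 2 / (2 * σ ^ 2)) * (1 / 2)))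
    continuousAt_const ?_ f hf
  · simpa [sum_apply] using this
  · intro p' hp'
    simp only [neg_apply, add_apply,
      ContinuousLinearMap.proj_apply, sum_apply, Gg_x, Gg_I]
    rw [neg_le_neg_iff, ← Finset.sum_add_distrib]
    refine Finset.sum_le_sum fun x _ => ?_
    rw [← mul_add, ← mul_add, ← add_div]
    refine mul_le_mul_of_nonneg_left (mul_le_mul_of_nonneg_left ?_ (by positivity)) (hμ x)
    have h1 := hp' Istar
    have h2 := hp' x.1
    rw [div_le_div_iff₀ (by norm_num) (by positivity)]
    nlinarith [sq_nonneg (p' Istar - p' x.1)]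

lemma LMOp_supp {K : ℕ} (θ : Fin K → ℝ) (σ : ℝ) (Istar : Fin K)
    (p : Fin K → ℝ) (μ : {x : Fin K // x ≠ Istar} → ℝ) (A : Set (Fin K))
    (hA : ∀ i, (∃ f ∈ Cg θ σ Istar p μ, ∀ j, f j ≤ f i) → i ∈ A) (q)
    (hq : q ∈ LMOpg θ σ Istar p μ) : q ∈ stdSimplex ℝ (Fin K) ∧ ∀ i ∉ A, q i = 0 := by
  have hconv : Convex ℝ (stdSimplex ℝ (Fin K) ∩ {q | ∀ i ∉ A, q i = 0}) := by
    refine (convex_stdSimplex ℝ _).inter ?_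
    intro x hx y hy a b _ _ _ i hi
    simp [hx i hi, hy i hi]
  refine convexHull_min ?_ hconv hq
  rintro e ⟨i, rfl, hi⟩
  refine ⟨single_mem_stdSimplex ℝ i, fun j hj => ?_⟩
  have : j ≠ i := fun h => hj (h ▸ hA i hi)
  simp [this]

lemma LMOmu_supp {K : ℕ} (θ : Fin K → ℝ) (σ : ℝ) (Istar : Fin K)
    (p : Fin K → ℝ) (A : Set {x : Fin K // x ≠ Istar})
    (hA : ∀ x : {x : Fin K // x ≠ Istar}, (∀ x' : {x : Fin K // x ≠ Istar},
      Dg θ σ Istar p x.1 ≤ Dg θ σ Istar p x'.1) → x ∈ A) (q)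
    (hq : q ∈ LMOmug θ σ Istar p) : q ∈ stdSimplex ℝ {x : Fin K // x ≠ Istar} ∧ ∀ i ∉ A, q i = 0 := by
  have hconv : Convex ℝ (stdSimplex ℝ {x : Fin K // x ≠ Istar} ∩ {q | ∀ i ∉ A, q i = 0}) := by
    refine (convex_stdSimplex ℝ _).inter ?_
    intro x hx y hy a b _ _ _ i hi
    simp [hx i hi, hy i hi]
  refine convexHull_min ?_ hconv hq
  rintro e ⟨i, rfl, hi⟩
  refine ⟨single_mem_stdSimplex ℝ i, fun j hj => ?_⟩
  have : j ≠ i := fun h => hj (h ▸ hA i hi)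
  simp [this]

lemma pigeon (N : ℕ → ℕ) (n : ℕ) (h : N 0 < n + N n) : ∃ k < n, N k ≤ N (k + 1) := by
  by_contra! hc
  have : ∀ k ≤ n, N k + k ≤ N 0 := by
    intro k
    induction k with
    | zero => simp
    | succ k ih =>
      intro hk
      have := hc k (by omega)
      have := ih (by omega)
      omega
  have := this n le_rfl
  omega

lemma flow_sum {ι : Type*} [Fintype ι] (p q : ℝ → ι → ℝ)
    (hqmeas : Measurable q) (hpc : ContinuousOn p (Set.Ici (0 : ℝ)))
    (hq : ∀ᵐ t ∂(volume.restrict (Set.Ici (0 : ℝ))), q t ∈ stdSimplex ℝ ι)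
    (hode : ∀ t ≥ (0 : ℝ), p t = p 0 + ∫ s in (0 : ℝ)..t, (q s - p s)) (A : Finset ι) :
    Continuous (fun t => ∑ i ∈ A, p (max t 0) i) ∧
    (∀ s t, 0 ≤ s → s ≤ t → IntervalIntegrable (fun r => ∑ i ∈ A, q r i) volume s t) ∧
    (∀ s t, 0 ≤ s → s ≤ t → ∑ i ∈ A, p (max t 0) i - ∑ i ∈ A, p (max s 0) i =
      (∫ r in s..t, ∑ i ∈ A, q r i) - ∫ r in s..t, ∑ i ∈ A, p (max r 0) i) := by
  have hpc' : Continuous (fun t => p (max t 0)) := by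
    refine hpc.comp_continuous (by fun_prop) fun t => Set.mem_Ici.2 (le_max_right _ _)
  have hpi : ∀ i, Continuous (fun t => p (max t 0) i) := fun i =>
    (continuous_apply i).comp hpc'
  have hqi : ∀ s t, 0 ≤ s → s ≤ t → IntervalIntegrable q volume s t := by
    intro s t hs hst
    rw [intervalIntegrable_iff_integrableOn_Ioc_of_le hst]
    refine Measure.integrableOn_of_bounded (M := 1) (by simp) hqmeas.aestronglyMeasurable ?_
    have hsub : Set.Ioc s t ⊆ Set.Ici (0:ℝ) := fun r hr => hs.trans hr.1.le
    filter_upwards [ae_restrict_of_ae_restrict_of_subset hsub hq] with r hr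
    rw [pi_norm_le_iff_of_nonneg zero_le_one]
    intro i
    rw [Real.norm_eq_abs, abs_of_nonneg (hr.1 i), ← hr.2]
    exact Finset.single_le_sum (fun j _ => hr.1 j) (Finset.mem_univ i)
  have hqii : ∀ i s t, 0 ≤ s → s ≤ t → IntervalIntegrable (fun r => q r i) volume s t := by
    intro i s t hs hst
    have := hqi s t hs hst
    exact ⟨(ContinuousLinearMap.proj (R := ℝ) (φ := fun _ : ι => ℝ) i).integrable_comp this.1,
      (ContinuousLinearMap.proj (R := ℝ) (φ := fun _ : ι => ℝ) i).integrable_comp this.2⟩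
  have hdiff : ∀ i s t, 0 ≤ s → s ≤ t → p (max t 0) i - p (max s 0) i =
      (∫ r in s..t, q r i) - ∫ r in s..t, p (max r 0) i := by
    intro i s t hs hst
    have key : ∀ t, 0 ≤ t → p (max t 0) i = p 0 i + ((∫ r in (0:ℝ)..t, q r i) -
        ∫ r in (0:ℝ)..t, p (max r 0) i) := by
      intro t ht
      rw [max_eq_left ht, hode t ht, ← intervalIntegral.integral_sub (hqii i 0 t le_rfl ht)
        ((hpi i).intervalIntegrable _ _)]
      have h1 : ∫ s in (0:ℝ)..t, (q s - p s) = ∫ s in (0:ℝ)..t, (q s - p (max s 0)) := by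
        refine intervalIntegral.integral_congr fun r hr => ?_
        rw [Set.uIcc_of_le ht] at hr
        simp [max_eq_left hr.1]
      rw [h1]
      have h2 := (ContinuousLinearMap.proj (R := ℝ) (φ := fun _ : ι => ℝ) i).intervalIntegral_comp_comm
        ((hqi 0 t le_rfl ht).sub (hpc'.intervalIntegrable 0 t))
      simp at h2
      simp [h2]
    have e1 := intervalIntegral.integral_add_adjacent_intervals (hqii i 0 s le_rfl hs) (hqii i s t hs hst)
    have e2 := intervalIntegral.integral_add_adjacent_intervals
      ((hpi i).intervalIntegrable 0 s (μ := volume)) ((hpi i).intervalIntegrable s t)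
    rw [key t (hs.trans hst), key s hs, ← e1, ← e2]
    ring
  refine ⟨continuous_finsetSum _ fun i _ => hpi i, fun s t hs hst => ?_, fun s t hs hst => ?_⟩
  · have := IntervalIntegrable.sum A (f := fun i r => q r i) (fun i _ => hqii i s t hs hst)
    rw [show (fun r => ∑ i ∈ A, q r i) = ∑ i ∈ A, fun r => q r i from by ext r; simp]
    exact this
  · rw [intervalIntegral.integral_finsetSum fun i _ => hqii i s t hs hst,
      intervalIntegral.integral_finsetSum fun i _ => (hpi i).intervalIntegrable _ _,
      ← Finset.sum_sub_distrib, ← Finset.sum_sub_distrib]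
    exact Finset.sum_congr rfl fun i _ => hdiff i s t hs hst

lemma persist (u w : ℝ → ℝ) (hu : Continuous u) (s t : ℝ) (hst : s ≤ t)
    (hode : ∀ r ∈ Set.Icc s t, u t - u r = (∫ x in r..t, w x) - ∫ x in r..t, u x)
    (hw : ∀ r ∈ Set.Icc s t, 0 ≤ ∫ x in r..t, w x) (hs : 0 < u s) : 0 < u t := by
  by_contra! hc
  have hy : ∀ r, HasDerivAt (fun r => ∫ x in r..t, u x) (-u r) r := fun r =>
    intervalIntegral.integral_hasDerivAt_left (hu.intervalIntegrable _ _)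
      hu.stronglyMeasurable.stronglyMeasurableAtFilter hu.continuousAt
  have hz : ∀ r, HasDerivAt (fun r => Real.exp r * ∫ x in r..t, u x)
      (Real.exp r * (∫ x in r..t, u x) + Real.exp r * (-u r)) r := fun r =>
    (Real.hasDerivAt_exp r).mul (hy r)
  have hmono : MonotoneOn (fun r => Real.exp r * ∫ x in r..t, u x) (Set.Icc s t) := by
    refine monotoneOn_of_deriv_nonneg (convex_Icc _ _)
      (fun r _ => (hz r).continuousAt.continuousWithinAt)
      (fun r _ => (hz r).differentiableAt.differentiableWithinAt) ?_
    intro r hr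
    rw [interior_Icc] at hr
    have hr' := Set.Ioo_subset_Icc_self hr
    rw [(hz r).deriv, ← mul_add]
    have := hode r hr'
    have := hw r hr'
    exact mul_nonneg (Real.exp_pos r).le (by linarith)
  have h1 := hmono (Set.left_mem_Icc.2 hst) (Set.right_mem_Icc.2 hst) hst
  simp only [intervalIntegral.integral_same, mul_zero] at h1
  have h2 : ∫ x in s..t, u x ≤ 0 := by
    by_contra! h
    have := mul_pos (Real.exp_pos s) h
    linarith
  have := hode s (Set.left_mem_Icc.2 hst)
  have := hw s (Set.left_mem_Icc.2 hst)
  linarith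

lemma decay (u : ℝ → ℝ) (hu : Continuous u) (s t : ℝ) (hst : s ≤ t)
    (hode : ∀ r ∈ Set.Icc s t, u r - u s = - ∫ x in s..r, u x) :
    u t = Real.exp (-(t - s)) * u s := by
  have hy : ∀ r, HasDerivAt (fun r => u s - ∫ x in s..r, u x) (-u r) r := fun r => by
    simpa using (intervalIntegral.integral_hasDerivAt_right (hu.intervalIntegrable s r)
      hu.stronglyMeasurable.stronglyMeasurableAtFilter hu.continuousAt).const_sub (u s)
  have hz : ∀ r, HasDerivAt (fun r => Real.exp r * (u s - ∫ x in s..r, u x))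
      (Real.exp r * (u s - ∫ x in s..r, u x) + Real.exp r * (-u r)) r := fun r =>
    (Real.hasDerivAt_exp r).mul (hy r)
  have hconst := constant_of_has_deriv_right_zero (a := s) (b := t)
    (f := fun r => Real.exp r * (u s - ∫ x in s..r, u x))
    (fun r _ => (hz r).continuousAt.continuousWithinAt)
    (fun r hr => by
      have h := hode r ⟨hr.1, hr.2.le⟩
      have h0 : Real.exp r * (u s - ∫ x in s..r, u x) + Real.exp r * (-u r) = 0 := by
        rw [show u r = u s - ∫ x in s..r, u x by linarith]; ring
      exact h0 ▸ (hz r).hasDerivWithinAt)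
  have h1 := hconst t (Set.right_mem_Icc.2 hst)
  have h := hode t (Set.right_mem_Icc.2 hst)
  simp only [intervalIntegral.integral_same, sub_zero] at h1
  rw [← show u t = u s - ∫ x in s..t, u x by linarith] at h1
  rw [neg_sub, Real.exp_sub]
  have := Real.exp_pos t
  field_simp
  linarith

lemma static1 {K : ℕ} (θ : Fin K → ℝ) (σ : ℝ) (Istar : Fin K)
    (ha : ∀ x : {x : Fin K // x ≠ Istar}, 0 < (θ Istar - θ x.1) ^ 2 / (2 * σ ^ 2))
    (p : Fin K → ℝ) (μ : {x : Fin K // x ≠ Istar} → ℝ) (hp : p ∈ stdSimplex ℝ (Fin K))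
    (hμ : μ ∈ stdSimplex ℝ {x : Fin K // x ≠ Istar}) (hI : p Istar = 0) (q)
    (hq : q ∈ LMOpg θ σ Istar p μ) : ∀ i, p i ≠ 0 → q i = 0 := by
  have := (LMOp_supp θ σ Istar p μ {i | p i = 0} ?_ q hq).2
  · exact this
  · rintro i ⟨f, hf, hmax⟩
    by_contra hi
    have hi0 : p i ≠ 0 := hi
    have hiI : i ≠ Istar := fun h => hi0 (h ▸ hI)
    have hpi : 0 < p i := lt_of_le_of_ne (hp.1 i) hi0.symm
    have h1 := C_x θ σ Istar p μ ⟨i, hiI⟩ (by simpa [hI] using hpi) f hf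
    simp [hI] at h1
    have h2 := C_sum θ σ Istar p μ hμ.1 f hf
    have h3 : f Istar + ∑ x : {x : Fin K // x ≠ Istar}, f x.1 ≤ 0 := by
      have : ∀ j, f j ≤ 0 := fun j => h1 ▸ hmax j
      have := this Istar
      have := Finset.sum_nonpos (s := Finset.univ)
        (f := fun x : {x : Fin K // x ≠ Istar} => f x.1) (fun x _ => by simp_all)
      linarith
    have h4 : ∀ x ∈ Finset.univ, 0 ≤ μ x * (((θ Istar - θ x.1) ^ 2 / (2 * σ ^ 2)) * (1 / 2)) :=
      fun x _ => mul_nonneg (hμ.1 x) (by have := ha x; positivity)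
    have h5 := (Finset.sum_eq_zero_iff_of_nonneg h4).1
      (le_antisymm (h2.trans h3) (Finset.sum_nonneg h4))
    have h6 : ∀ x, μ x = 0 := fun x => by
      have := h5 x (Finset.mem_univ x)
      rcases mul_eq_zero.1 this with h | h
      · exact h
      · have := ha x
        linarith
    have := hμ.2
    simp [h6] at this

lemma static2 {K : ℕ} (θ : Fin K → ℝ) (σ : ℝ) (Istar : Fin K) (κ M ε : ℝ) (hκ : 0 < κ)
    (hM : 0 < M)
    (ha : ∀ x : {x : Fin K // x ≠ Istar}, 4 * κ ≤ (θ Istar - θ x.1) ^ 2 / (2 * σ ^ 2))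
    (hb : ∀ x : {x : Fin K // x ≠ Istar}, (θ Istar - θ x.1) ^ 2 / (2 * σ ^ 2) ≤ M)
    (hε1 : ε ≤ 1 / 2) (hε2 : ε ≤ κ / (4 * K * M))
    (p : Fin K → ℝ) (μ : {x : Fin K // x ≠ Istar} → ℝ) (hp : p ∈ stdSimplex ℝ (Fin K))
    (hμ : μ ∈ stdSimplex ℝ {x : Fin K // x ≠ Istar}) (hI : 0 < p Istar)
    (hm : ∑ x with p x.1 ≠ 0, μ x ≤ ε) (q)
    (hq : q ∈ LMOpg θ σ Istar p μ) : ∀ i, p i ≠ 0 → q i = 0 := by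
  have := (LMOp_supp θ σ Istar p μ {i | p i = 0} ?_ q hq).2
  · exact this
  · rintro i ⟨f, hf, hmax⟩
    by_contra hi
    have hi0 : p i ≠ 0 := hi
    have hK : (0:ℝ) < K := by exact_mod_cast i.pos
    set m := ∑ x with p x.1 ≠ 0, μ x with hmdef
    have hs : ∀ x : {x : Fin K // x ≠ Istar}, 0 < p Istar + p x.1 := fun x =>
      add_pos_of_pos_of_nonneg hI (hp.1 _)
    have hMm : M * m ≤ κ / (4 * K) := by
      have h := hm.trans hε2
      calc M * m ≤ M * (κ / (4 * K * M)) := mul_le_mul_of_nonneg_left h hM.le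
        _ = κ / (4 * K) := by field_simp
    have hfi : f i ≤ M * m := by
      by_cases hiI : i = Istar
      · rw [hiI]
        refine (C_I θ σ Istar p μ hs f hf).trans ?_
        rw [hmdef, Finset.mul_sum, Finset.sum_filter]
        refine Finset.sum_le_sum fun x _ => ?_
        split_ifs with h
        · rw [mul_comm M]
          refine mul_le_mul_of_nonneg_left ?_ (hμ.1 x)
          have h1 : p x.1 ^ 2 / (p Istar + p x.1) ^ 2 ≤ 1 := by
            have := hs x
            rw [div_le_one (by positivity)]
            have := hp.1 x.1
            gcongr
            linarith
          have := mul_le_mul (hb x) h1 (by positivity) hM.le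
          linarith
        · have h : p x.1 = 0 := by simpa using h
          simp [h]
      · rw [C_x θ σ Istar p μ ⟨i, hiI⟩ (hs ⟨i, hiI⟩) f hf]
        have h1 : μ ⟨i, hiI⟩ ≤ m :=
          Finset.single_le_sum (f := μ) (fun x _ => hμ.1 x) (by simpa using hi0)
        have h2 : p Istar ^ 2 / (p Istar + p i) ^ 2 ≤ 1 := by
          have : 0 < p Istar + p i := hs ⟨i, hiI⟩
          rw [div_le_one (by positivity)]
          have := hp.1 i
          gcongr
          linarith
        have h3 := mul_le_mul (hb ⟨i, hiI⟩) h2 (by positivity) hM.le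
        have h4 := mul_le_mul h1 h3 (by positivity) ((hμ.1 _).trans h1)
        dsimp only at h4 ⊢
        linarith
    have hz : ∀ x : {x : Fin K // x ≠ Istar}, p x.1 = 0 → μ x * (4 * κ) ≤ κ / (4 * K) := by
      intro x hx
      have h1 := C_x θ σ Istar p μ x (hs x) f hf
      rw [hx] at h1
      have h2 : p Istar ^ 2 / (p Istar + 0) ^ 2 = 1 := by
        rw [add_zero]; exact div_self (by positivity)
      rw [h2, mul_one] at h1
      have := mul_le_mul_of_nonneg_left (ha x) (hμ.1 x)
      have := hmax x.1
      linarith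
    have hsum : ∑ x with p x.1 = 0, μ x + m = 1 := by
      rw [hmdef, ← hμ.2]
      exact Finset.sum_filter_add_sum_filter_not Finset.univ (fun x : {x : Fin K // x ≠ Istar} => p x.1 = 0) μ
    have hle : (∑ x with p x.1 = 0, μ x) * (4 * κ) ≤ κ / 4 := by
      rw [Finset.sum_mul]
      calc _ ≤ ∑ x : {x : Fin K // x ≠ Istar} with p x.1 = 0, κ / (4 * K) :=
            Finset.sum_le_sum fun x hx => hz x (by simpa using hx)
        _ = ((Finset.univ.filter fun x : {x : Fin K // x ≠ Istar} => p x.1 = 0).card : ℝ) * (κ / (4 * K)) := by simp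
        _ ≤ (K:ℝ) * (κ / (4 * K)) := by
            gcongr
            refine (Finset.card_filter_le _ _).trans ?_
            rw [Finset.card_univ]
            simpa using Fintype.card_subtype_le (fun x : Fin K => x ≠ Istar)
        _ = κ / 4 := by field_simp
    nlinarith

lemma static3 {K : ℕ} (θ : Fin K → ℝ) (σ : ℝ) (Istar : Fin K)
    (ha : ∀ x : {x : Fin K // x ≠ Istar}, 0 < (θ Istar - θ x.1) ^ 2 / (2 * σ ^ 2))
    (p : Fin K → ℝ) (hp : p ∈ stdSimplex ℝ (Fin K)) (hI : 0 < p Istar)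
    (hx : ∃ i, p i = 0) (ν)
    (hν : ν ∈ LMOmug θ σ Istar p) : ∀ x, p x.1 ≠ 0 → ν x = 0 := by
  have := (LMOmu_supp θ σ Istar p {x | p x.1 = 0} ?_ ν hν).2
  · exact this
  · intro x hmin
    by_contra hx0
    have hx0 : p x.1 ≠ 0 := hx0
    have hpx : 0 < p x.1 := lt_of_le_of_ne (hp.1 _) hx0.symm
    obtain ⟨i, hi⟩ := hx
    have hiI : i ≠ Istar := fun h => by rw [h] at hi; linarith
    have h := hmin ⟨i, hiI⟩
    have h1 : Dg θ σ Istar p i = 0 := by simp [Dg, hi]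
    have h2 : 0 < Dg θ σ Istar p x.1 := by
      rw [Dg, if_pos (by positivity)]
      exact mul_pos (ha x) (by positivity)
    dsimp only at h
    linarith

/-- finite-time interior entry for the Frank–Wolfe self-play flow in
Gaussian BAI. With `κ_min = min_{x∈X} (θ_{I*}−θ_x)²/(8σ²)`,
`M = max_{x∈X} (θ_{I*}−θ_x)²/(2σ²)`, `ε₀ = min{1/2, κ_min/(4KM)}` and
`T* = (K−1)(log(1/ε₀) + log 2)`, every absolutely continuous solution (integral form)
of the differential inclusion driven by a.e. selections from `LMO_p` and `LMO_μ`,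
started anywhere in `Δ_K × Δ_X`, has all coordinates of `p(t)` strictly positive for
every `t > T*`. -/
theorem stmt_13 {K : ℕ} (hK : 1 < K) (θ : Fin K → ℝ) (Istar : Fin K)
    (hmax : ∀ j ≠ Istar, θ j < θ Istar) (σ : ℝ) (hσ : 0 < σ)
    (κmin M ε₀ Tstar : ℝ)
    (hκ : κmin = ⨅ x : {x : Fin K // x ≠ Istar}, (θ Istar - θ x.1) ^ 2 / (8 * σ ^ 2))
    (hM : M = ⨆ x : {x : Fin K // x ≠ Istar}, (θ Istar - θ x.1) ^ 2 / (2 * σ ^ 2))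
    (hε₀ : ε₀ = min (1 / 2) (κmin / (4 * K * M)))
    (hT : Tstar = ((K : ℝ) - 1) * (Real.log (1 / ε₀) + Real.log 2))
    (p : ℝ → (Fin K → ℝ)) (μ : ℝ → ({x : Fin K // x ≠ Istar} → ℝ))
    (q : ℝ → (Fin K → ℝ)) (ν : ℝ → ({x : Fin K // x ≠ Istar} → ℝ))
    (hmem : ∀ t ≥ (0 : ℝ), p t ∈ stdSimplex ℝ (Fin K) ∧
      μ t ∈ stdSimplex ℝ {x : Fin K // x ≠ Istar})
    (hqmeas : Measurable q) (hνmeas : Measurable ν)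
    (hpc : ContinuousOn p (Set.Ici (0 : ℝ))) (hμc : ContinuousOn μ (Set.Ici (0 : ℝ)))
    (hsel : ∀ᵐ t ∂(volume.restrict (Set.Ici (0 : ℝ))),
      q t ∈ LMOpg θ σ Istar (p t) (μ t) ∧ ν t ∈ LMOmug θ σ Istar (p t))
    (hodep : ∀ t ≥ (0 : ℝ), p t = p 0 + ∫ s in (0 : ℝ)..t, (q s - p s))
    (hodeμ : ∀ t ≥ (0 : ℝ), μ t = μ 0 + ∫ s in (0 : ℝ)..t, (ν s - μ s)) :
    ∀ t > Tstar, ∀ i, 0 < p t i := by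
  have hKpos : (0:ℝ) < K := by exact_mod_cast (by omega : 0 < K)
  have ha : ∀ x : {x : Fin K // x ≠ Istar}, 0 < (θ Istar - θ x.1) ^ 2 / (2 * σ ^ 2) := fun x => by
    have := sub_pos.2 (hmax x.1 x.2)
    positivity
  obtain ⟨x0, hx0⟩ : ∃ x : Fin K, x ≠ Istar := by
    haveI : Nontrivial (Fin K) := Fin.nontrivial_iff_two_le.2 hK
    exact exists_ne Istar
  haveI : Nonempty {x : Fin K // x ≠ Istar} := ⟨⟨x0, hx0⟩⟩
  have hκle : ∀ x : {x : Fin K // x ≠ Istar}, 4 * κmin ≤ (θ Istar - θ x.1) ^ 2 / (2 * σ ^ 2) := by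
    intro x
    have : κmin ≤ (θ Istar - θ x.1) ^ 2 / (8 * σ ^ 2) := by
      rw [hκ]
      exact ciInf_le (Set.finite_range fun x : {x : Fin K // x ≠ Istar} => (θ Istar - θ x.1) ^ 2 / (8 * σ ^ 2)).bddBelow x
    calc 4 * κmin ≤ 4 * ((θ Istar - θ x.1) ^ 2 / (8 * σ ^ 2)) := by linarith
      _ = _ := by field_simp; ring
  have hκpos : 0 < κmin := by
    obtain ⟨x, hx⟩ := exists_eq_ciInf_of_finite
      (f := fun x : {x : Fin K // x ≠ Istar} => (θ Istar - θ x.1) ^ 2 / (8 * σ ^ 2))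
    rw [hκ, ← hx]
    have := sub_pos.2 (hmax x.1 x.2)
    positivity
  have hMle : ∀ x : {x : Fin K // x ≠ Istar}, (θ Istar - θ x.1) ^ 2 / (2 * σ ^ 2) ≤ M := by
    intro x
    rw [hM]
    exact le_ciSup (Set.finite_range fun x : {x : Fin K // x ≠ Istar} => (θ Istar - θ x.1) ^ 2 / (2 * σ ^ 2)).bddAbove x
  have hMpos : 0 < M := (ha ⟨x0, hx0⟩).trans_le (hMle _)
  have hε1 : ε₀ ≤ 1 / 2 := hε₀ ▸ min_le_left _ _
  have hε2 : ε₀ ≤ κmin / (4 * K * M) := hε₀ ▸ min_le_right _ _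
  have hεpos : 0 < ε₀ := by
    rw [hε₀]; exact lt_min (by norm_num) (by positivity)
  -- selections lie in the simplices
  have hqS : ∀ᵐ t ∂(volume.restrict (Set.Ici (0 : ℝ))), q t ∈ stdSimplex ℝ (Fin K) := by
    filter_upwards [hsel] with t ht
    exact (LMOp_supp θ σ Istar _ _ Set.univ (fun _ _ => trivial) _ ht.1).1
  have hνS : ∀ᵐ t ∂(volume.restrict (Set.Ici (0 : ℝ))),
      ν t ∈ stdSimplex ℝ {x : Fin K // x ≠ Istar} := by
    filter_upwards [hsel] with t ht
    exact (LMOmu_supp θ σ Istar _ Set.univ (fun _ _ => trivial) _ ht.2).1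
  have hflow := flow_sum p q hqmeas hpc hqS hodep
  have hflowμ := flow_sum μ ν hνmeas hμc hνS hodeμ
  have hmono : ∀ i s t, 0 ≤ s → s ≤ t → 0 < p s i → 0 < p t i := by
    intro i s t hs hst hpos
    obtain ⟨h1, h2, h3⟩ := hflow {i}
    have h := persist _ (fun r => ∑ j ∈ {i}, q r j) h1 s t hst
      (fun r hr => h3 r t (hs.trans hr.1) hr.2) ?_ ?_
    · simpa [max_eq_left (hs.trans hst)] using h
    · intro r hr
      refine intervalIntegral.integral_nonneg_of_ae_restrict hr.2 ?_
      have hsub : Set.Icc r t ⊆ Set.Ici (0:ℝ) := fun x hx => (hs.trans hr.1).trans hx.1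
      filter_upwards [ae_restrict_of_ae_restrict_of_subset hsub hqS] with x hx
      simpa using hx.1 i
    · simpa [max_eq_left hs] using hpos
  have hne : ∀ t ≥ (0:ℝ), ∀ i, p t i ≠ 0 ↔ 0 < p t i := fun t ht i =>
    ⟨fun h => lt_of_le_of_ne ((hmem t ht).1.1 i) h.symm, fun h => h.ne'⟩
  set Z : ℝ → Finset (Fin K) := fun t => Finset.univ.filter fun i => p t i = 0 with hZ
  have hZmem : ∀ t i, i ∈ Z t ↔ p t i = 0 := fun t i => by simp [hZ]
  have hZanti : ∀ s t, 0 ≤ s → s ≤ t → Z t ⊆ Z s := by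
    intro s t hs hst i hi
    rw [hZmem] at hi ⊢
    by_contra h
    exact (hmono i s t hs hst ((hne s hs i).1 h)).ne' hi
  have hZconst : ∀ a b, 0 ≤ a → (Z a).card ≤ (Z b).card → ∀ t ∈ Set.Icc a b, Z t = Z a := by
    intro a b h0 hc t ht
    refine Finset.eq_of_subset_of_card_le (hZanti a t h0 ht.1) (hc.trans ?_)
    exact Finset.card_le_card (hZanti t b (h0.trans ht.1) ht.2)
  have stuck : ∀ a b, 0 ≤ a → a < b → (∀ t ∈ Set.Icc a b, Z t = Z a) →
      (∀ᵐ t ∂(volume.restrict (Set.Icc a b)), ∀ i, p t i ≠ 0 → q t i = 0) → False := by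
    intro a b h0 hab hc hsupp
    obtain ⟨h1, h2, h3⟩ := hflow (Z a)
    have hu : ∀ t ∈ Set.Icc a b, ∑ i ∈ Z a, p (max t 0) i = 0 := by
      intro t ht
      rw [max_eq_left (h0.trans ht.1)]
      refine Finset.sum_eq_zero fun i hi => ?_
      rw [← hc t ht] at hi
      exact (hZmem t i).1 hi
    have h := h3 a b h0 hab.le
    rw [hu a (Set.left_mem_Icc.2 hab.le), hu b (Set.right_mem_Icc.2 hab.le)] at h
    have e1 : ∫ r in a..b, ∑ i ∈ Z a, p (max r 0) i = 0 := by
      rw [intervalIntegral.integral_congr (g := fun _ => (0:ℝ))]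
      · simp
      · intro t ht
        rw [Set.uIcc_of_le hab.le] at ht
        exact hu t ht
    have e2 : ∫ r in a..b, ∑ i ∈ Z a, q r i = ∫ r in a..b, (1:ℝ) := by
      rw [intervalIntegral.integral_of_le hab.le, intervalIntegral.integral_of_le hab.le,
        ← integral_Icc_eq_integral_Ioc, ← integral_Icc_eq_integral_Ioc]
      refine integral_congr_ae ?_
      have hsub : Set.Icc a b ⊆ Set.Ici (0:ℝ) := fun x hx => h0.trans hx.1
      filter_upwards [ae_restrict_of_ae_restrict_of_subset hsub hqS, hsupp,
        ae_restrict_mem measurableSet_Icc] with t ht hs htm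
      rw [← ht.2]
      refine Finset.sum_subset (Finset.subset_univ _) fun i _ hi => hs i fun h => hi ?_
      rw [← hc t htm]
      exact (hZmem t i).2 h
    rw [e1, e2] at h
    simp at h
    linarith
  -- the leader's coordinate becomes positive at once
  have hIpos : ∀ t > 0, 0 < p t Istar := by
    intro t ht
    by_contra hc
    have hIz : ∀ s ∈ Set.Icc 0 t, p s Istar = 0 := by
      intro s hs
      by_contra h
      exact hc (hmono Istar s t hs.1 hs.2 ((hne s hs.1 _).1 h))
    obtain ⟨k, hk, hcard⟩ := pigeon (fun k => (Z (k * (t / (K + 1)))).card) (K + 1) (by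
      have : (Z ((0:ℕ) * (t / (K + 1)))).card ≤ K := by
        simpa using Finset.card_le_univ (Z ((0:ℕ) * (t / (K + 1))))
      omega)
    have hst : 0 < t / (K + 1) := by positivity
    have ha0 : 0 ≤ k * (t / (K + 1)) := by positivity
    have hbt : ((k + 1 : ℕ) : ℝ) * (t / (K + 1)) ≤ t := by
      have : ((k + 1 : ℕ) : ℝ) ≤ K + 1 := by exact_mod_cast hk
      calc ((k + 1 : ℕ) : ℝ) * (t / (K + 1)) ≤ (K + 1) * (t / (K + 1)) := by gcongr
        _ = t := by field_simp
    refine stuck _ _ ha0 ?_ (hZconst _ _ ha0 hcard) ?_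
    · push_cast; linarith
    · have hsub : Set.Icc (k * (t / (K + 1))) (((k + 1 : ℕ) : ℝ) * (t / (K + 1))) ⊆ Set.Ici (0:ℝ) :=
        fun x hx => ha0.trans hx.1
      filter_upwards [ae_restrict_of_ae_restrict_of_subset hsub hsel,
        ae_restrict_mem measurableSet_Icc] with s hs hsm
      have hs0 : 0 ≤ s := ha0.trans hsm.1
      exact static1 θ σ Istar ha (p s) (μ s) (hmem s hs0).1 (hmem s hs0).2
        (hIz s ⟨hs0, hsm.2.trans hbt⟩) _ hs.1
  -- main argument
  intro T hTT i0
  have hlog2 : 0 < Real.log 2 := Real.log_pos (by norm_num)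
  set L := Real.log (1 / ε₀) with hL
  have hLnn : 0 ≤ L := Real.log_nonneg (by rw [le_div_iff₀ hεpos]; linarith)
  have hexpL : Real.exp (-L) = ε₀ := by
    rw [hL, one_div, Real.log_inv, neg_neg, Real.exp_log hεpos]
  have hK1 : ((K - 1 : ℕ) : ℝ) = (K:ℝ) - 1 := by
    rw [Nat.cast_sub (by omega)]; simp
  have hT0 : 0 ≤ Tstar := by
    rw [hT, ← hK1]; positivity
  have hTpos : 0 < T := by linarith
  by_contra hcon
  have hi0 : p T i0 = 0 := by
    by_contra h
    exact hcon ((hne T hTpos.le i0).1 h)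
  set h := L + Real.log 2 with hh
  have hhpos : 0 < h := by positivity
  set τ : ℕ → ℝ := fun k => (T - Tstar) + k * h with hτ
  have hτpos : ∀ k, 0 < τ k := fun k => by
    have : (0:ℝ) ≤ k * h := by positivity
    simp only [hτ]; linarith
  have hτlast : τ (K - 1) = T := by
    simp only [hτ]; rw [hK1, hT]; ring
  obtain ⟨k, hk, hcard⟩ := pigeon (fun k => (Z (τ k)).card) (K - 1) (by
    have h1 : (Z (τ 0)).card < K := by
      have : (Z (τ 0)).card < (Finset.univ : Finset (Fin K)).card := by
        refine Finset.card_lt_card (Finset.ssubset_univ_iff.2 fun hu => ?_)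
        have : Istar ∈ Z (τ 0) := hu ▸ Finset.mem_univ _
        exact (hIpos _ (hτpos 0)).ne' ((hZmem _ _).1 this)
      simpa using this
    have h2 : 0 < (Z (τ (K - 1))).card :=
      Finset.card_pos.2 ⟨i0, by rw [hτlast]; exact (hZmem _ _).2 hi0⟩
    show (Z (τ 0)).card < K - 1 + (Z (τ (K - 1))).card
    omega)
  set a := τ k with haτ
  have ha0 : 0 < a := hτpos k
  have hb : τ (k + 1) = a + h := by simp only [haτ, hτ]; push_cast; ring
  have hcst := hZconst a (τ (k + 1)) ha0.le hcard
  rw [hb] at hcst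
  have hbT : a + h ≤ T := by
    rw [← hb, ← hτlast]
    have : ((k + 1 : ℕ) : ℝ) ≤ (K - 1 : ℕ) := by exact_mod_cast hk
    simp only [hτ]
    have := mul_le_mul_of_nonneg_right this hhpos.le
    linarith
  -- mass outside `Z`
  set B : Finset {x : Fin K // x ≠ Istar} := Finset.univ.filter fun x => p a x.1 ≠ 0 with hB
  have hpB : ∀ t ∈ Set.Icc a (a + h), ∀ i, p t i = 0 ↔ p a i = 0 := fun t ht i => by
    rw [← hZmem, ← hZmem, hcst t ht]
  have hmass : ∀ t ∈ Set.Icc (a + L) (a + h), ∑ x ∈ B, μ t x ≤ ε₀ := by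
    intro t ht
    obtain ⟨g1, g2, g3⟩ := hflowμ B
    have hat : a ≤ t := by linarith [ht.1]
    have hd := decay _ g1 a t hat ?_
    · simp only [max_eq_left ha0.le, max_eq_left (ha0.le.trans hat)] at hd
      rw [hd]
      have h1 : ∑ x ∈ B, μ a x ≤ 1 := by
        rw [← (hmem a ha0.le).2.2]
        exact Finset.sum_le_sum_of_subset_of_nonneg (Finset.subset_univ _)
          fun x _ _ => (hmem a ha0.le).2.1 x
      have h2 : Real.exp (-(t - a)) ≤ ε₀ := by
        rw [← hexpL]; exact Real.exp_le_exp.2 (by linarith [ht.1])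
      have h3 := mul_le_mul_of_nonneg_left h1 (Real.exp_pos (-(t - a))).le
      linarith
    · intro r hr
      rw [g3 a r ha0.le hr.1]
      have : ∫ s in a..r, ∑ x ∈ B, ν s x = 0 := by
        rw [intervalIntegral.integral_of_le hr.1, ← integral_Icc_eq_integral_Ioc]
        refine integral_eq_zero_of_ae ?_
        have hsub : Set.Icc a r ⊆ Set.Ici (0:ℝ) := fun x hx => ha0.le.trans hx.1
        filter_upwards [ae_restrict_of_ae_restrict_of_subset hsub hsel,
          ae_restrict_mem measurableSet_Icc] with s hs hsm
        have hs0 : 0 < s := ha0.trans_le hsm.1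
        have hsI : s ∈ Set.Icc a (a + h) := ⟨hsm.1, hsm.2.trans (hr.2.trans ht.2)⟩
        refine Finset.sum_eq_zero fun x hx => ?_
        refine static3 θ σ Istar ha (p s) (hmem s hs0.le).1 (hIpos s hs0) ⟨i0, ?_⟩ _ hs.2 x ?_
        · exact (hZmem s i0).1 (hZanti s T hs0.le (hsI.2.trans hbT) ((hZmem T i0).2 hi0))
        · rw [Ne, hpB s hsI]
          simpa [hB] using hx
      rw [this, zero_sub]
  refine stuck (a + L) (a + h) (by linarith) (by linarith) ?_ ?_
  · intro t ht
    rw [hcst t ⟨by linarith [ht.1], ht.2⟩, hcst (a + L) ⟨by linarith, by linarith⟩]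
  · have hsub : Set.Icc (a + L) (a + h) ⊆ Set.Ici (0:ℝ) := fun x hx => by
      have := hx.1
      exact Set.mem_Ici.2 (by linarith)
    filter_upwards [ae_restrict_of_ae_restrict_of_subset hsub hsel,
      ae_restrict_mem measurableSet_Icc] with s hs hsm
    have hs0 : 0 < s := by linarith [hsm.1]
    have hsI : s ∈ Set.Icc a (a + h) := ⟨by linarith [hsm.1], hsm.2⟩
    refine static2 θ σ Istar κmin M ε₀ hκpos hMpos hκle hMle hε1 hε2 (p s) (μ s)
      (hmem s hs0.le).1 (hmem s hs0.le).2 (hIpos s hs0) ?_ _ hs.1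
    refine le_trans (le_of_eq ?_) (hmass s hsm)
    rw [hB]
    refine Finset.sum_congr (Finset.filter_congr fun x _ => ?_) fun _ _ => rfl
    rw [Ne, Ne, hpB s hsI]

end
end
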